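/- For every integer n ≥ 3, n(n² − 2) · Σ_{k=1}^{n−2} |R(w_k)| = (n − 2) · |R(w_0^B)|. -/

import Mathlib

/-- The generator `sᵢ` of the hyperoctahedral group `Bₙ`, realized as a permutation of `ℤ`:
`s₀` swaps `1` and `-1`; for `i ≥ 1`, `sᵢ` swaps `i` with `i+1` and `-i` with `-(i+1)`,
fixing all other integers. -/
def sB (i : ℕ) : Equiv.Perm ℤ :=
  if i = 0 then Equiv.swap 1 (-1)
  else Equiv.swap (i : ℤ) ((i : ℤ) + 1) * Equiv.swap (-(i : ℤ)) (-((i : ℤ) + 1))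

/-- The product `s_{i₁} ⋯ s_{i_ℓ}` corresponding to the word `i₁ ⋯ i_ℓ`. -/
def wordProd (l : List ℕ) : Equiv.Perm ℤ := (l.map sB).prod

/-- The underlying function of the longest element `w₀ᴮ ∈ Bₙ`: `i ↦ -i` on `{-n, …, n}`,
fixing all other integers. -/
def w0BFun (n : ℕ) : ℤ → ℤ := fun i => if -(n : ℤ) ≤ i ∧ i ≤ (n : ℤ) then -i else i

lemma w0BFun_involutive (n : ℕ) : Function.Involutive (w0BFun n) := by
  intro i
  unfold w0BFun
  split_ifs <;> omega

/-- The longest element `w₀ᴮ ∈ Bₙ`, as a permutation of `ℤ`. -/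
def w0B (n : ℕ) : Equiv.Perm ℤ := (w0BFun_involutive n).toPerm

/-- `l` is a reduced decomposition of `w` in `Bₙ`: a word over the alphabet `{0, …, n-1}`
whose product of generators is `w`, of minimal length among all such words. -/
def IsReducedWord (n : ℕ) (w : Equiv.Perm ℤ) (l : List ℕ) : Prop :=
  (∀ i ∈ l, i < n) ∧ wordProd l = w ∧
    ∀ l' : List ℕ, (∀ i ∈ l', i < n) → wordProd l' = w → l.length ≤ l'.length

/-- `R(w)`, the set of reduced decompositions of `w` in `Bₙ`. -/
def RSet (n : ℕ) (w : Equiv.Perm ℤ) : Set (List ℕ) := {l | IsReducedWord n w l}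

/-- The length `ℓ(w)` of `w ∈ Bₙ`: the minimal length of a word over `{0, …, n-1}`
whose product of generators is `w`. -/
noncomputable def lenB (n : ℕ) (w : Equiv.Perm ℤ) : ℕ :=
  sInf {m : ℕ | ∃ l : List ℕ, (∀ i ∈ l, i < n) ∧ wordProd l = w ∧ l.length = m}

/-- Whether a word begins with `k (k+1) k` or `(k+1) k (k+1)` for some `k ≥ 1`. -/
def isYB : List ℕ → Bool
  | a :: b :: c :: _ => (a != 0 && b == a + 1 && c == a) || (b != 0 && a == b + 1 && c == b + 1)
  | _ => false

/-- The number of Yang–Baxter moves in a word. -/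
def ybCount (l : List ℕ) : ℕ :=
  ((Finset.range l.length).filter fun j => isYB (l.drop j) = true).card

/-- Whether a word begins with `0101` or `1010`. -/
def is01 : List ℕ → Bool
  | a :: b :: c :: d :: _ =>
      (a == 0 && b == 1 && c == 0 && d == 1) || (a == 1 && b == 0 && c == 1 && d == 0)
  | _ => false

/-- The number of 01 moves in a word. -/
def m01Count (l : List ℕ) : ℕ :=
  ((Finset.range l.length).filter fun j => is01 (l.drop j) = true).card

/-- The underlying function of `w_k ∈ Bₙ`: `k ↦ -(k+2)`, `k+2 ↦ -k`, and `i ↦ -i` for all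
other `i ∈ {1, …, n}`, extended by `w(-i) = -w(i)` and fixing all integers outside
`{-n, …, -1, 1, …, n}`. -/
def wkFun (n k : ℕ) : ℤ → ℤ := fun i =>
  if -(n : ℤ) ≤ i ∧ i ≤ (n : ℤ) then
    if i = (k : ℤ) then -((k : ℤ) + 2)
    else if i = (k : ℤ) + 2 then -(k : ℤ)
    else if i = -(k : ℤ) then (k : ℤ) + 2
    else if i = -((k : ℤ) + 2) then (k : ℤ)
    else -i
  else i

/-- The underlying function of `w' ∈ Bₙ`: `1 ↦ 1`, `2 ↦ 2`, and `i ↦ -i` for `3 ≤ i ≤ n`,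
extended by `w(-i) = -w(i)` and fixing all integers outside `{-n, …, -1, 1, …, n}`. -/
def wpFun (n : ℕ) : ℤ → ℤ := fun i =>
  if (-(n : ℤ) ≤ i ∧ i ≤ (n : ℤ)) ∧ (i < -2 ∨ 2 < i) then -i else i

/-- `w`, viewed as a signed permutation of `{1, …, n}` via the values `w(1), …, w(n)`,
contains the signed pattern `p` (given by its list of values `p(1), …, p(m)`). -/
def ContainsPattern (n : ℕ) (w : ℤ → ℤ) (p : List ℤ) : Prop :=
  ∃ j : Fin p.length → ℤ, StrictMono j ∧ (∀ r, 1 ≤ j r ∧ j r ≤ (n : ℤ)) ∧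
    (∀ r s, w (j r) < w (j s) ↔ p.get r < p.get s) ∧
    (∀ r, w (j r) < 0 ↔ p.get r < 0)

/-!
Length-preserving transitions (multiplication by a reflection, after Lascoux–Schützenberger and
Billey) replace `w_0^B` and `w_k` by Grassmannian elements, increasing on the positive integers,
without changing the number of reduced decompositions. The absolute values of the negative entries
of these elements form the set `{1, 3, …, 2n - 1}`, respectively the same set with `2k + 3` replaced
by `2k`. The transitions rest on the following fact: for a fixed position `r`, sum over the
reflections `t` that move `r` and create an inversion of `w` the number of words of length `m` for
`w * t`, signed according to whether `t` exchanges `r` with an earlier or a later position. This sum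
satisfies the same recursion in `m` as the numbers of words themselves, and therefore vanishes for
`m` up to one more than the length of `w`.

Reduced decompositions of a Grassmannian element are counted by Thrall's product formula for shifted
standard tableaux, so that `|R(w_k)| / |R(w_0^B)|` is an explicit product, and the sum over `k` is a
Lagrange interpolation sum with nodes `x * (x - 3)` for `x` in `{1, 3, …, 2n - 1}`. The product
formula itself is the analogous identity with nodes `x * (x - 1)`.
-/

open Finset

/-- The nonzero integer preceding `k + 1`: the generator `sB k` is the reflection exchanging
`sBLow k` and `k + 1`. -/
def sBLow (k : ℕ) : ℤ := if k = 0 then -1 else k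

/-- The reflection of the hyperoctahedral group exchanging `i` with `j` and `-i` with `-j`.
It is the identity when `i` or `j` is `0`, so that it is a signed permutation in every case. -/
def signedSwap (i j : ℤ) : Equiv.Perm ℤ :=
  if i = 0 ∨ j = 0 then 1
  else if i = -j then Equiv.swap i j
  else Equiv.swap i j * Equiv.swap (-i) (-j)

lemma signedSwap_apply (i j x : ℤ) : signedSwap i j x =
    if i = 0 ∨ j = 0 then x else if x = i then j else if x = j then i else
    if x = -i then -j else if x = -j then -i else x := by
  unfold signedSwap
  split_ifs <;>
    simp only [Equiv.Perm.mul_apply, Equiv.swap_apply_def, Equiv.Perm.one_apply] <;>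
    split_ifs <;> omega

lemma signedSwap_apply_left {i j : ℤ} (hi : i ≠ 0) (hj : j ≠ 0) : signedSwap i j i = j := by
  simp [signedSwap_apply, hi, hj]

lemma signedSwap_apply_right {i j : ℤ} (hi : i ≠ 0) (hj : j ≠ 0) : signedSwap i j j = i := by
  rw [signedSwap_apply]; split_ifs <;> omega

lemma signedSwap_apply_of_ne {i j x : ℤ} (h₁ : x ≠ i) (h₂ : x ≠ j) (h₃ : x ≠ -i) (h₄ : x ≠ -j) :
    signedSwap i j x = x := by
  rw [signedSwap_apply]; split_ifs <;> omega

lemma signedSwap_comm (i j : ℤ) : signedSwap i j = signedSwap j i := by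
  ext x; simp only [signedSwap_apply]; split_ifs <;> omega

lemma signedSwap_mul_self (i j : ℤ) : signedSwap i j * signedSwap i j = 1 := by
  ext x
  simp only [Equiv.Perm.mul_apply, signedSwap_apply, Equiv.Perm.one_apply]
  split_ifs <;> omega

lemma sBLow_cases (k : ℕ) : (k = 0 ∧ sBLow k = -1) ∨ (0 < k ∧ sBLow k = k) := by
  unfold sBLow; split_ifs <;> omega

lemma sB_eq_signedSwap (k : ℕ) : sB k = signedSwap (sBLow k) (k + 1) := by
  ext x
  have := sBLow_cases k
  rw [signedSwap_apply, if_neg (by omega)]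
  unfold sB
  split_ifs <;> simp only [Equiv.Perm.mul_apply, Equiv.swap_apply_def] <;> split_ifs <;> omega

lemma sB_apply (k : ℕ) (x : ℤ) : sB k x =
    if x = sBLow k then (k : ℤ) + 1 else if x = k + 1 then sBLow k
    else if x = -sBLow k then -((k : ℤ) + 1) else if x = -((k : ℤ) + 1) then -sBLow k else x := by
  rw [sB_eq_signedSwap, signedSwap_apply, if_neg (by have := sBLow_cases k; omega)]

lemma sB_mul_self (k : ℕ) : sB k * sB k = 1 := by
  rw [sB_eq_signedSwap, signedSwap_mul_self]

lemma sB_inv (k : ℕ) : (sB k)⁻¹ = sB k :=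
  inv_eq_of_mul_eq_one_left (sB_mul_self k)

lemma sB_sB (k : ℕ) (x : ℤ) : sB k (sB k x) = x := by
  rw [← Equiv.Perm.mul_apply, sB_mul_self, Equiv.Perm.one_apply]

lemma sB_mul_cancel (k : ℕ) (w : Equiv.Perm ℤ) : sB k * (sB k * w) = w := by
  rw [← mul_assoc, sB_mul_self, one_mul]

lemma sB_neg (k : ℕ) (x : ℤ) : sB k (-x) = -sB k x := by
  have := sBLow_cases k
  simp only [sB_apply]; split_ifs <;> omega

lemma sB_lt_sB_iff (k : ℕ) {x y : ℤ} (hx : x ≠ 0) (hy : y ≠ 0) (h : sB k x ≠ y) :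
    sB k x < sB k y ↔ x < y := by
  have := sBLow_cases k
  rw [sB_apply] at h
  simp only [sB_apply]; split_ifs at * <;> omega

lemma signedSwap_sB {k : ℕ} {x : ℤ} (h : sB k x ≠ x) : signedSwap x (sB k x) = sB k := by
  have := sBLow_cases k
  ext y
  rw [signedSwap_apply]
  rw [sB_apply] at h
  simp only [sB_apply]; split_ifs at * <;> omega

/-- Membership in `B_N`, realised as in `sB` by the odd permutations of `ℤ` that fix every integer
of absolute value greater than `N`. -/
structure IsSignedPerm (N : ℕ) (w : Equiv.Perm ℤ) : Prop where
  map_neg : ∀ x, w (-x) = -w x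
  map_of_lt : ∀ x : ℤ, N < x → w x = x

lemma isSignedPerm_sB {N k : ℕ} (hk : k < N) : IsSignedPerm N (sB k) where
  map_neg := sB_neg k
  map_of_lt x hx := by
    have := sBLow_cases k
    rw [sB_apply]; split_ifs <;> omega

lemma isSignedPerm_signedSwap {N : ℕ} {i j : ℤ} (hi : |i| ≤ N) (hj : |j| ≤ N) :
    IsSignedPerm N (signedSwap i j) where
  map_neg x := by simp only [signedSwap_apply]; split_ifs <;> omega
  map_of_lt x hx := by
    rw [abs_le] at hi hj
    rw [signedSwap_apply]; split_ifs <;> omega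

namespace IsSignedPerm

variable {N : ℕ} {w u : Equiv.Perm ℤ}

lemma mul (hw : IsSignedPerm N w) (hu : IsSignedPerm N u) : IsSignedPerm N (w * u) where
  map_neg x := by simp [hw.map_neg, hu.map_neg]
  map_of_lt x hx := by simp [hu.map_of_lt x hx, hw.map_of_lt x hx]

lemma inv (hw : IsSignedPerm N w) : IsSignedPerm N w⁻¹ where
  map_neg x := by rw [Equiv.Perm.inv_eq_iff_eq, hw.map_neg]; simp
  map_of_lt x hx := by rw [Equiv.Perm.inv_eq_iff_eq, hw.map_of_lt x hx]

lemma mono {M : ℕ} (hw : IsSignedPerm N w) (h : N ≤ M) : IsSignedPerm M w :=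
  ⟨hw.map_neg, fun x hx => hw.map_of_lt x (by omega)⟩

lemma map_zero (hw : IsSignedPerm N w) : w 0 = 0 := by
  have := hw.map_neg 0
  rw [neg_zero] at this
  omega

lemma map_ne_zero (hw : IsSignedPerm N w) {x : ℤ} (hx : x ≠ 0) : w x ≠ 0 :=
  fun h => hx (w.injective (h.trans hw.map_zero.symm))

lemma map_of_lt_abs (hw : IsSignedPerm N w) {x : ℤ} (hx : (N : ℤ) < |x|) : w x = x := by
  rcases lt_abs.1 hx with h | h
  · exact hw.map_of_lt x h
  · rw [← neg_inj, ← hw.map_neg, hw.map_of_lt (-x) h]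

lemma abs_map_le (hw : IsSignedPerm N w) {x : ℤ} (hx : |x| ≤ N) : |w x| ≤ N := by
  by_contra! h
  rw [w.injective (hw.map_of_lt_abs h)] at h
  omega

lemma mul_signedSwap (hw : IsSignedPerm N w) (i j : ℤ) :
    w * signedSwap i j = signedSwap (w i) (w j) * w := by
  ext x
  have hz : ∀ y, w y = 0 ↔ y = 0 := fun y =>
    ⟨not_imp_not.1 hw.map_ne_zero, fun h => h ▸ hw.map_zero⟩
  simp only [Equiv.Perm.mul_apply, signedSwap_apply, ← hw.map_neg, w.injective.eq_iff, hz]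
  split_ifs <;> rfl

lemma mul_signedSwap_eq_sB_mul (hw : IsSignedPerm N w) {i j : ℤ} {k : ℕ}
    (h : sB k (w i) = w j) (hij : i ≠ j) :
    w * signedSwap i j = sB k * w := by
  rw [hw.mul_signedSwap, ← h, signedSwap_sB]
  rw [h]
  exact w.injective.ne hij.symm

end IsSignedPerm

/-- Representatives of the positive roots of `B_N`: the pairs `i < j` of nonzero integers in
`[-N, N]`, of which the one with `-j ≤ i` is chosen among `(i, j)` and `(-j, -i)`. -/
noncomputable def signedPairs (N : ℕ) : Finset (ℤ × ℤ) :=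
  {p ∈ Icc (-(N : ℤ)) N ×ˢ Icc (1 : ℤ) N | p.1 ≠ 0 ∧ -p.2 ≤ p.1 ∧ p.1 < p.2}

lemma mem_signedPairs {N : ℕ} {p : ℤ × ℤ} :
    p ∈ signedPairs N ↔ p.2 ≤ N ∧ p.1 ≠ 0 ∧ -p.2 ≤ p.1 ∧ p.1 < p.2 := by
  simp only [signedPairs, mem_filter, mem_product, mem_Icc]
  omega

/-- The number of inversions of a signed permutation, which is its Coxeter length in `B_N`. -/
noncomputable def invCount (N : ℕ) (w : Equiv.Perm ℤ) : ℕ := #{p ∈ signedPairs N | w p.2 < w p.1}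

lemma invCount_one (N : ℕ) : invCount N 1 = 0 := by
  rw [invCount, card_eq_zero, filter_eq_empty_iff]
  intro p hp
  exact (mem_signedPairs.1 hp).2.2.2.not_gt

namespace IsSignedPerm

variable {N : ℕ} {w : Equiv.Perm ℤ}

lemma exists_signedPairs_sB_eq_iff (hw : IsSignedPerm N w) {k : ℕ} (hk : k < N)
    (h : w⁻¹ (k + 1) < w⁻¹ (sBLow k)) :
    ∃ p ∈ signedPairs N, w p.2 < w p.1 ∧
      ∀ q ∈ signedPairs N, sB k (w q.2) = w q.1 ↔ q = p := by
  have hlow := sBLow_cases k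
  obtain ⟨i, hi⟩ : ∃ i, i = w⁻¹ (k + 1) := ⟨_, rfl⟩
  obtain ⟨j, hj⟩ : ∃ j, j = w⁻¹ (sBLow k) := ⟨_, rfl⟩
  rw [← hi, ← hj] at h
  rw [Equiv.Perm.eq_inv_iff_eq] at hi hj
  have hi₀ : i ≠ 0 := by rintro rfl; rw [hw.map_zero] at hi; omega
  have hj₀ : j ≠ 0 := by rintro rfl; rw [hw.map_zero] at hj; omega
  have hiN : |i| ≤ N := by
    by_contra! h'
    rw [hw.map_of_lt_abs h'] at hi; rw [lt_abs] at h'; omega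
  have hjN : |j| ≤ N := by
    by_contra! h'
    rw [hw.map_of_lt_abs h'] at hj; rw [lt_abs] at h'; omega
  rw [abs_le] at hiN hjN
  have hni : w (-i) = -(k + 1) := by rw [hw.map_neg, hi]
  have hnj : w (-j) = -sBLow k := by rw [hw.map_neg, hj]
  have hmove : ∀ a b : ℤ, a ≠ b → (sB k (w b) = w a ↔
      a = i ∧ b = j ∨ a = j ∧ b = i ∨ a = -i ∧ b = -j ∨ a = -j ∧ b = -i) := by
    intro a b hab
    replace hab := w.injective.ne hab
    simp only [← w.injective.eq_iff (b := i), ← w.injective.eq_iff (b := j),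
      ← w.injective.eq_iff (b := -i), ← w.injective.eq_iff (b := -j), hi, hj, hni, hnj]
    rw [sB_apply]; split_ifs <;> omega
  by_cases hij : -j ≤ i
  · refine ⟨(i, j), mem_signedPairs.2 (by simp only; omega), by simp only; omega, ?_⟩
    rintro ⟨a, b⟩ hq
    rw [mem_signedPairs] at hq
    rw [hmove a b hq.2.2.2.ne, Prod.mk.injEq]
    simp only at hq; omega
  · refine ⟨(-j, -i), mem_signedPairs.2 (by simp only; omega), by simp only; omega, ?_⟩
    rintro ⟨a, b⟩ hq
    rw [mem_signedPairs] at hq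
    rw [hmove a b hq.2.2.2.ne, Prod.mk.injEq]
    simp only at hq; omega

lemma invCount_sB_mul_of_desc (hw : IsSignedPerm N w) {k : ℕ} (hk : k < N)
    (h : w⁻¹ (k + 1) < w⁻¹ (sBLow k)) : invCount N (sB k * w) + 1 = invCount N w := by
  obtain ⟨p, hp, hlt, huniq⟩ := hw.exists_signedPairs_sB_eq_iff hk h
  have hmem : p ∈ ({q ∈ signedPairs N | w q.2 < w q.1} : Finset (ℤ × ℤ)) := by simp [hp, hlt]
  have hfix : sB k (w p.2) = w p.1 := (huniq p hp).2 rfl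
  rw [invCount, invCount, ← card_erase_add_one hmem]
  congr 2
  ext q
  rw [mem_erase, mem_filter, mem_filter, Equiv.Perm.mul_apply, Equiv.Perm.mul_apply]
  rcases eq_or_ne q p with rfl | hqp
  · rw [hfix, ← hfix, sB_sB, hfix]
    simp [hlt.le]
  · have hq : q ∈ signedPairs N → (sB k (w q.2) < sB k (w q.1) ↔ w q.2 < w q.1) := by
      intro hq
      have hq' := mem_signedPairs.1 hq
      exact sB_lt_sB_iff k (hw.map_ne_zero (by omega)) (hw.map_ne_zero (by omega))
        fun h' => hqp ((huniq q hq).1 h')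
    tauto

lemma invCount_sB_mul_of_asc (hw : IsSignedPerm N w) {k : ℕ} (hk : k < N)
    (h : w⁻¹ (sBLow k) < w⁻¹ (k + 1)) : invCount N (sB k * w) = invCount N w + 1 := by
  have := ((isSignedPerm_sB hk).mul hw).invCount_sB_mul_of_desc hk <| by
    rwa [mul_inv_rev, sB_inv, sB_eq_signedSwap, Equiv.Perm.mul_apply, Equiv.Perm.mul_apply,
      signedSwap_apply_left, signedSwap_apply_right] <;>
    have := sBLow_cases k <;> omega
  rwa [sB_mul_cancel, eq_comm] at this

lemma inv_sBLow_ne (w : Equiv.Perm ℤ) (k : ℕ) : w⁻¹ (sBLow k) ≠ w⁻¹ (k + 1) :=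
  w⁻¹.injective.ne (by have := sBLow_cases k; omega)

lemma invCount_sB_mul (hw : IsSignedPerm N w) {k : ℕ} (hk : k < N) :
    (w⁻¹ (k + 1) < w⁻¹ (sBLow k) ∧ invCount N (sB k * w) + 1 = invCount N w) ∨
    (w⁻¹ (sBLow k) < w⁻¹ (k + 1) ∧ invCount N (sB k * w) = invCount N w + 1) := by
  rcases lt_or_gt_of_ne (inv_sBLow_ne w k) with h | h
  · exact Or.inr ⟨h, hw.invCount_sB_mul_of_asc hk h⟩
  · exact Or.inl ⟨h, hw.invCount_sB_mul_of_desc hk h⟩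

lemma inv_sBLow_lt_of_le (hw : IsSignedPerm N w) {k : ℕ} (hk : N ≤ k) :
    w⁻¹ (sBLow k) < w⁻¹ (k + 1) := by
  rw [hw.inv.map_of_lt (k + 1) (by omega)]
  rcases sBLow_cases k with ⟨hk₀, hlow⟩ | ⟨hk₀, hlow⟩
  · rw [hw.inv.map_of_lt_abs (by rw [lt_abs]; omega)]; omega
  · have := abs_le.1 ((hw.inv.mono hk).abs_map_le (x := sBLow k) (by rw [abs_le]; omega))
    omega

/-- Without a descent, `w⁻¹` is an order automorphism of `ℤ` fixing `0`. -/
lemma exists_desc_of_ne_one (hw : IsSignedPerm N w) (h : w ≠ 1) :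
    ∃ k < N, w⁻¹ (k + 1) < w⁻¹ (sBLow k) := by
  by_contra! hle
  have hasc : ∀ k : ℕ, w⁻¹ (sBLow k) < w⁻¹ (k + 1) := fun k =>
    (lt_or_ge k N).elim (fun hk => (hle k hk).lt_of_ne (inv_sBLow_ne w k)) hw.inv_sBLow_lt_of_le
  have hmono : StrictMono ⇑w⁻¹ := by
    refine strictMono_int_of_lt_succ fun m => ?_
    have hnat : ∀ m : ℕ, w⁻¹ m < w⁻¹ (m + 1) := by
      rintro (_ | m)
      · have := hasc 0
        simp only [sBLow, if_true, hw.inv.map_neg] at this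
        simp only [Nat.cast_zero, zero_add, hw.inv.map_zero] at this ⊢
        omega
      · exact hasc (m + 1)
    rcases lt_or_ge m 0 with hm | hm
    · obtain ⟨n, rfl⟩ : ∃ n : ℕ, m = -(n + 1) := ⟨(-m - 1).toNat, by omega⟩
      rw [show -((n : ℤ) + 1) + 1 = -n by ring, hw.inv.map_neg, hw.inv.map_neg]
      exact neg_lt_neg (hnat n)
    · lift m to ℕ using hm
      exact hnat m
  have hsucc : ∀ m, w⁻¹ (m + 1) = w⁻¹ m + 1 :=
    (hmono.orderIsoOfSurjective ⇑w⁻¹ w⁻¹.surjective).map_succ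
  apply h
  rw [← inv_eq_one]
  ext m
  induction m using Int.induction_on with
  | zero => exact hw.inv.map_zero
  | succ m ih => rw [hsucc, ih]; rfl
  | pred m ih =>
    have := hsucc (-m - 1)
    rw [sub_add_cancel, ih] at this
    simp only [Equiv.Perm.one_apply] at this ⊢
    omega

lemma eq_one_of_invCount_eq_zero (hw : IsSignedPerm N w) (h : invCount N w = 0) : w = 1 := by
  by_contra hne
  obtain ⟨k, hk, hdesc⟩ := hw.exists_desc_of_ne_one hne
  have := hw.invCount_sB_mul_of_desc hk hdesc
  omega

lemma invCount_mul_signedSwap_lt (hw : IsSignedPerm N w) {i j : ℤ} (hi₀ : i ≠ 0) (hj₀ : j ≠ 0)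
    (hi : |i| ≤ N) (hj : |j| ≤ N) (hij : i < j) (hlt : w j < w i) :
    invCount N (w * signedSwap i j) < invCount N w := by
  induction hL : invCount N w generalizing w with
  | zero =>
    rw [hw.eq_one_of_invCount_eq_zero hL] at hlt
    exact absurd hlt hij.not_gt
  | succ L ih =>
    have hne : w ≠ 1 := by rintro rfl; exact hij.not_gt hlt
    obtain ⟨k, hk, hdesc⟩ := hw.exists_desc_of_ne_one hne
    have hu := (isSignedPerm_sB hk).mul hw
    have hlen := hw.invCount_sB_mul_of_desc hk hdesc
    by_cases hs : sB k (w i) = w j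
    · rw [hw.mul_signedSwap_eq_sB_mul hs hij.ne]; omega
    · have hs' : sB k (w j) ≠ w i := fun h => hs (by rw [← h, sB_sB])
      have hlt' := (sB_lt_sB_iff k (hw.map_ne_zero hj₀) (hw.map_ne_zero hi₀) hs').2 hlt
      have hrec := ih hu hlt' (by omega)
      have hstep := (hu.mul (isSignedPerm_signedSwap hi hj)).invCount_sB_mul hk
      rw [mul_assoc, sB_mul_cancel, ← mul_assoc] at hstep
      omega

lemma lt_invCount_mul_signedSwap (hw : IsSignedPerm N w) {i j : ℤ} (hi₀ : i ≠ 0) (hj₀ : j ≠ 0)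
    (hi : |i| ≤ N) (hj : |j| ≤ N) (hij : i < j) (hlt : w i < w j) :
    invCount N w < invCount N (w * signedSwap i j) := by
  have hw' := hw.mul (isSignedPerm_signedSwap hi hj)
  have := hw'.invCount_mul_signedSwap_lt hi₀ hj₀ hi hj hij <| by
    simpa only [Equiv.Perm.mul_apply, signedSwap_apply_left hi₀ hj₀,
      signedSwap_apply_right hi₀ hj₀] using hlt
  rwa [mul_assoc, signedSwap_mul_self, mul_one] at this

/-- With `i < p < j`, the reflection `t_{ij}` is the product `t_{ip} t_{pj} t_{ip}`, each factor of
which exchanges two values in increasing order. -/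
lemma add_three_le_invCount_mul_signedSwap (hw : IsSignedPerm N w) {i j p : ℤ} (hi₀ : i ≠ 0)
    (hj₀ : j ≠ 0) (hp₀ : p ≠ 0) (hi : |i| ≤ N) (hj : |j| ≤ N) (hip : i < p) (hpj : p < j)
    (h₁ : w i < w p) (h₂ : w p < w j) (hij : i ≠ -j) (hpi : p ≠ -i) (hpj' : p ≠ -j) :
    invCount N w + 3 ≤ invCount N (w * signedSwap i j) := by
  have hp : |p| ≤ N := by rw [abs_le] at *; omega
  have hip' := isSignedPerm_signedSwap hi hp
  have hi_ip := signedSwap_apply_left hi₀ hp₀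
  have hp_ip := signedSwap_apply_right hi₀ hp₀
  have hj_ip : signedSwap i p j = j := by apply signedSwap_apply_of_ne <;> omega
  have hi_pj : signedSwap p j i = i := by apply signedSwap_apply_of_ne <;> omega
  have hp_pj := signedSwap_apply_left hp₀ hj₀
  have heq : w * signedSwap i j = w * signedSwap i p * signedSwap p j * signedSwap i p := by
    rw [mul_assoc w, hip'.mul_signedSwap, hp_ip, hj_ip, ← mul_assoc, mul_assoc,
      signedSwap_mul_self, mul_one]
  have hw₁ := hw.mul hip'
  have hw₂ := hw₁.mul (isSignedPerm_signedSwap hp hj)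
  have hlt₁ := hw.lt_invCount_mul_signedSwap hi₀ hp₀ hi hp hip h₁
  have hlt₂ := hw₁.lt_invCount_mul_signedSwap hp₀ hj₀ hp hj hpj (by
    simp only [Equiv.Perm.mul_apply, hp_ip, hj_ip]; omega)
  have hlt₃ := hw₂.lt_invCount_mul_signedSwap hi₀ hp₀ hi hp hip (by
    simp only [Equiv.Perm.mul_apply, hi_pj, hp_pj, hi_ip, hj_ip]; omega)
  rw [heq]; omega

end IsSignedPerm

open Classical in
/-- The words of length `m` over the alphabet `{0, …, N - 1}` whose product of generators is `w`. -/
noncomputable def words (N : ℕ) : ℕ → Equiv.Perm ℤ → Finset (List ℕ)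
  | 0, w => if w = 1 then {[]} else ∅
  | m + 1, w => (range N).biUnion fun k => (words N m (sB k * w)).image (List.cons k)

lemma wordProd_cons (k : ℕ) (l : List ℕ) : wordProd (k :: l) = sB k * wordProd l := by
  simp [wordProd]

lemma mem_words {N m : ℕ} {w : Equiv.Perm ℤ} {l : List ℕ} :
    l ∈ words N m w ↔ (∀ i ∈ l, i < N) ∧ wordProd l = w ∧ l.length = m := by
  induction m generalizing w l with
  | zero =>
    rw [List.length_eq_zero_iff, words]
    split_ifs with h
    · rw [mem_singleton]
      refine ⟨?_, fun h => h.2.2⟩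
      rintro rfl
      simp [h, wordProd]
    · refine iff_of_false (notMem_empty l) ?_
      rintro ⟨-, hprod, rfl⟩
      exact h hprod.symm
  | succ m ih =>
    simp only [words, mem_biUnion, mem_image, mem_range, ih]
    constructor
    · rintro ⟨k, hk, l, ⟨hl, hprod, hlen⟩, rfl⟩
      exact ⟨List.forall_mem_cons.2 ⟨hk, hl⟩, by rw [wordProd_cons, hprod, sB_mul_cancel],
        congrArg Nat.succ hlen⟩
    · rintro ⟨hl, hprod, hlen⟩
      obtain ⟨k, l, rfl⟩ := List.exists_cons_of_length_eq_add_one hlen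
      obtain ⟨hk, hl⟩ := List.forall_mem_cons.1 hl
      exact ⟨k, hk, l, ⟨hl, by rw [← hprod, wordProd_cons, sB_mul_cancel], Nat.succ.inj hlen⟩, rfl⟩

lemma card_words_succ (N m : ℕ) (w : Equiv.Perm ℤ) :
    #(words N (m + 1) w) = ∑ k ∈ range N, #(words N m (sB k * w)) := by
  rw [words, card_biUnion]
  · exact sum_congr rfl fun k _ => card_image_of_injective _ List.cons_injective
  · intro a _ b _ hab
    simp only [disjoint_left, mem_image]
    rintro _ ⟨l, -, rfl⟩ ⟨l', -, h⟩
    exact hab (List.cons.inj h).1.symm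

namespace IsSignedPerm

variable {n N : ℕ} {w : Equiv.Perm ℤ}

lemma invCount_le_invCount_sB_mul_add_one (hw : IsSignedPerm N w) {k : ℕ} (hk : k < N) :
    invCount N w ≤ invCount N (sB k * w) + 1 := by
  rcases hw.invCount_sB_mul hk with ⟨_, h⟩ | ⟨_, h⟩ <;> omega

lemma invCount_le_length (hw : IsSignedPerm N w) {l : List ℕ} (hl : ∀ i ∈ l, i < N)
    (hprod : wordProd l = w) : invCount N w ≤ l.length := by
  induction l generalizing w with
  | nil => rw [← hprod]; exact (invCount_one N).le
  | cons k l ih =>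
    obtain ⟨hk, hl⟩ := List.forall_mem_cons.1 hl
    have := ih ((isSignedPerm_sB hk).mul hw) hl (by rw [← hprod, wordProd_cons, sB_mul_cancel])
    exact (hw.invCount_le_invCount_sB_mul_add_one hk).trans (Nat.succ_le_succ this)

lemma words_eq_empty (hw : IsSignedPerm N w) {m : ℕ} (hm : m < invCount N w) :
    words N m w = ∅ := by
  rw [eq_empty_iff_forall_notMem]
  intro l hmem
  obtain ⟨hl, hprod, rfl⟩ := mem_words.1 hmem
  exact hm.not_ge (hw.invCount_le_length hl hprod)

lemma words_invCount_nonempty (hw : IsSignedPerm N w) : (words N (invCount N w) w).Nonempty := by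
  induction hm : invCount N w generalizing w with
  | zero =>
    refine ⟨[], mem_words.2 ⟨by simp, ?_, rfl⟩⟩
    rw [hw.eq_one_of_invCount_eq_zero hm]
    rfl
  | succ m ih =>
    have hne : w ≠ 1 := by rintro rfl; simp [invCount_one] at hm
    obtain ⟨k, hk, hdesc⟩ := hw.exists_desc_of_ne_one hne
    have hlen := hw.invCount_sB_mul_of_desc hk hdesc
    obtain ⟨l, hl⟩ := ih ((isSignedPerm_sB hk).mul hw) (by omega)
    rw [words]
    exact ⟨k :: l, mem_biUnion.2 ⟨k, mem_range.2 hk, mem_image_of_mem _ hl⟩⟩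

lemma RSet_eq_words (hw : IsSignedPerm N w) : RSet N w = words N (invCount N w) w := by
  ext l
  rw [mem_coe, mem_words]
  constructor
  · rintro ⟨hl, hprod, hmin⟩
    obtain ⟨l', hl'⟩ := hw.words_invCount_nonempty
    obtain ⟨hl', hprod', hlen'⟩ := mem_words.1 hl'
    exact ⟨hl, hprod, ((hmin l' hl' hprod').trans_eq hlen').antisymm
      (hw.invCount_le_length hl hprod)⟩
  · rintro ⟨hl, hprod, hlen⟩
    exact ⟨hl, hprod, fun l' hl' hprod' => hlen ▸ hw.invCount_le_length hl' hprod'⟩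

lemma card_RSet (hw : IsSignedPerm N w) : Nat.card (RSet N w) = #(words N (invCount N w) w) := by
  rw [hw.RSet_eq_words]
  simp

lemma invCount_eq_of_le (hw : IsSignedPerm n w) (h : n ≤ N) : invCount N w = invCount n w := by
  unfold invCount
  congr 1
  ext ⟨i, j⟩
  have hlt (hj : (n : ℤ) < j) (hij : i < j) : w i < w j := by
    rw [hw.map_of_lt j hj]
    rcases le_or_gt |i| (n : ℤ) with hi | hi
    · exact (abs_le.1 (hw.abs_map_le hi)).2.trans_lt hj
    · rwa [hw.map_of_lt_abs hi]
  simp only [mem_filter, mem_signedPairs]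
  omega

lemma words_eq_of_le (hw : IsSignedPerm n w) (h : n ≤ N) {m : ℕ} (hm : m ≤ invCount n w) :
    words N m w = words n m w := by
  induction m generalizing w with
  | zero => rfl
  | succ m ih =>
    have hempty : ∀ k ∈ range N, k ∉ range n → words N m (sB k * w) = ∅ := by
      intro k hk hkn
      rw [mem_range] at hk hkn
      have hk' := isSignedPerm_sB hk
      have hlen := (hw.mono h).invCount_sB_mul_of_asc hk (hw.inv_sBLow_lt_of_le (not_lt.1 hkn))
      rw [hw.invCount_eq_of_le h] at hlen
      exact (hk'.mul (hw.mono h)).words_eq_empty (by omega)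
    have hsame : ∀ k ∈ range n, words N m (sB k * w) = words n m (sB k * w) := by
      intro k hk
      rw [mem_range] at hk
      have := hw.invCount_le_invCount_sB_mul_add_one hk
      exact ih ((isSignedPerm_sB hk).mul hw) (by omega)
    rw [words, words]
    ext l
    simp only [mem_biUnion]
    constructor
    · rintro ⟨k, hk, hl⟩
      by_cases hkn : k ∈ range n
      · exact ⟨k, hkn, hsame k hkn ▸ hl⟩
      · simp [hempty k hk hkn] at hl
    · rintro ⟨k, hk, hl⟩
      exact ⟨k, range_mono h hk, (hsame k hk).symm ▸ hl⟩

lemma card_RSet_eq_of_le (hw : IsSignedPerm n w) (h : n ≤ N) :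
    Nat.card (RSet N w) = Nat.card (RSet n w) := by
  rw [(hw.mono h).card_RSet, hw.card_RSet, hw.invCount_eq_of_le h, hw.words_eq_of_le h le_rfl]

end IsSignedPerm

/-- The sign with which `w * signedSwap q r` enters the transition formula at `r`: it is `1` when
`q < r`, `-1` when `r < q`, and `0` unless the exchange creates an inversion. -/
def coverSign (r : ℤ) (w : Equiv.Perm ℤ) (q : ℤ) : ℤ :=
  if q < r ∧ w q < w r then 1 else if r < q ∧ w r < w q then -1 else 0

/-- The sum over all reflections `signedSwap q r` of the number of words of length `m` for
`w * signedSwap q r`, with signs `coverSign r w q`. -/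
noncomputable def transitionSum (N m : ℕ) (r : ℤ) (w : Equiv.Perm ℤ) : ℤ :=
  ∑ q ∈ (Icc (-(N : ℤ)) N).erase 0, coverSign r w q * #(words N m (w * signedSwap q r))

lemma mem_erase_zero_Icc {N : ℕ} {q : ℤ} : q ∈ (Icc (-(N : ℤ)) N).erase 0 ↔ q ≠ 0 ∧ |q| ≤ N := by
  rw [mem_erase, mem_Icc, abs_le]

lemma sign_sB_sub (k : ℕ) {x : ℤ} (hx : x ≠ 0) : (sB k x - x).sign =
    x.sign * ((if k = x.natAbs then 1 else 0) - if k = x.natAbs - 1 then 1 else 0) := by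
  have hlow := sBLow_cases k
  rw [sB_apply]
  rcases lt_or_gt_of_ne hx with h | h
  · rw [Int.sign_eq_neg_one_of_neg h]
    split_ifs <;> first
      | omega
      | rw [Int.sign_eq_one_of_pos (by omega)]; omega
      | rw [Int.sign_eq_neg_one_of_neg (by omega)]; omega
      | rw [sub_self]; rfl
  · rw [Int.sign_eq_one_of_pos h]
    split_ifs <;> first
      | omega
      | rw [Int.sign_eq_one_of_pos (by omega)]; omega
      | rw [Int.sign_eq_neg_one_of_neg (by omega)]; omega
      | rw [sub_self]; rfl

lemma sum_sign_sB_sub {N : ℕ} {x : ℤ} (hx : x ≠ 0) (hxN : |x| < N) :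
    ∑ k ∈ range N, (sB k x - x).sign = 0 := by
  rw [abs_lt] at hxN
  rw [sum_congr rfl fun k _ => sign_sB_sub k hx, ← mul_sum, sum_sub_distrib, sum_ite_eq',
    sum_ite_eq', if_pos (mem_range.2 (by omega)), if_pos (mem_range.2 (by omega)), sub_self,
    mul_zero]

namespace IsSignedPerm

variable {N : ℕ} {w : Equiv.Perm ℤ}

lemma coverSign_sB_mul (hw : IsSignedPerm N w) {q r : ℤ} (hq : q ≠ 0) (hr : r ≠ 0) (k : ℕ) :
    coverSign r (sB k * w) q =
      coverSign r w q + if sB k (w q) = w r then (w q - w r).sign else 0 := by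
  by_cases h : sB k (w q) = w r
  · have h' : sB k (w r) = w q := by rw [← h, sB_sB]
    rw [if_pos h, coverSign, coverSign, Equiv.Perm.mul_apply, Equiv.Perm.mul_apply, h, h']
    have hqr : q = r → w q = w r := congrArg w
    rcases lt_trichotomy (w q) (w r) with hlt | heq | hlt
    · rw [Int.sign_eq_neg_one_of_neg (by omega)]; split_ifs <;> omega
    · rw [heq, sub_self, Int.sign_zero]; split_ifs <;> omega
    · rw [Int.sign_eq_one_of_pos (by omega)]; split_ifs <;> omega
  · have hq' := hw.map_ne_zero hq
    have hr' := hw.map_ne_zero hr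
    have h' : sB k (w r) ≠ w q := fun hrq => h (by rw [← hrq, sB_sB])
    simp only [if_neg h, coverSign, Equiv.Perm.mul_apply, sB_lt_sB_iff k hq' hr' h,
      sB_lt_sB_iff k hr' hq' h', add_zero]

lemma transitionSum_sB_mul (hw : IsSignedPerm N w) {r : ℤ} (hr₀ : r ≠ 0) (hr : |r| ≤ N)
    {k m : ℕ} (hk : k < N) :
    transitionSum N m r (sB k * w) =
      (∑ q ∈ (Icc (-(N : ℤ)) N).erase 0,
        coverSign r w q * #(words N m (sB k * (w * signedSwap q r)))) +
      (sB k (w r) - w r).sign * #(words N m w) := by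
  obtain ⟨p, hp⟩ := w.surjective (sB k (w r))
  have hmem : p ∈ (Icc (-(N : ℤ)) N).erase 0 := by
    have hk' := isSignedPerm_sB hk
    rw [mem_erase_zero_Icc]
    constructor
    · rintro rfl
      exact hk'.map_ne_zero (hw.map_ne_zero hr₀) (by rw [← hp, hw.map_zero])
    · by_contra! h
      have := hk'.abs_map_le (hw.abs_map_le hr)
      rw [← hp, hw.map_of_lt_abs h] at this
      omega
  have hterm : ∀ q, (if sB k (w q) = w r then (w q - w r).sign else 0) *
        (#(words N m (sB k * w * signedSwap q r)) : ℤ) =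
      if q = p then (sB k (w r) - w r).sign * #(words N m w) else 0 := by
    intro q
    have hiff : sB k (w q) = w r ↔ q = p := by
      rw [← (sB k).injective.eq_iff, sB_sB, ← hp, w.injective.eq_iff]
    simp only [hiff]
    split_ifs with hqp
    · subst hqp
      rw [hp]
      rcases eq_or_ne q r with rfl | hqr
      · rw [← hp]; simp
      · rw [mul_assoc, hw.mul_signedSwap_eq_sB_mul (hiff.2 rfl) hqr, sB_mul_cancel]
    · rw [zero_mul]
  unfold transitionSum
  rw [sum_congr rfl fun q hq => by
    rw [hw.coverSign_sB_mul (mem_erase_zero_Icc.1 hq).1 hr₀ k, add_mul, hterm q],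
    sum_add_distrib, sum_ite_eq', if_pos hmem]
  simp only [mul_assoc]

lemma transitionSum_succ (hw : IsSignedPerm N w) {r : ℤ} (hr₀ : r ≠ 0) (hr : |r| ≤ N)
    (hwr : |w r| < N) (m : ℕ) :
    transitionSum N (m + 1) r w = ∑ k ∈ range N, transitionSum N m r (sB k * w) := by
  rw [sum_congr rfl fun k hk => hw.transitionSum_sB_mul hr₀ hr (mem_range.1 hk),
    sum_add_distrib, ← sum_mul, sum_sign_sB_sub (hw.map_ne_zero hr₀) hwr, zero_mul, add_zero,
    sum_comm, transitionSum]
  simp only [card_words_succ, Nat.cast_sum, mul_sum]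

lemma invCount_lt_of_coverSign_ne_zero (hw : IsSignedPerm N w) {q r : ℤ} (hq₀ : q ≠ 0)
    (hr₀ : r ≠ 0) (hq : |q| ≤ N) (hr : |r| ≤ N) (h : coverSign r w q ≠ 0) :
    invCount N w < invCount N (w * signedSwap q r) := by
  unfold coverSign at h
  split_ifs at h with h₁ h₂
  · exact hw.lt_invCount_mul_signedSwap hq₀ hr₀ hq hr h₁.1 h₁.2
  · rw [signedSwap_comm]
    exact hw.lt_invCount_mul_signedSwap hr₀ hq₀ hr hq h₂.1 h₂.2
  · exact absurd rfl h

lemma transitionSum_eq_zero_of_le (hw : IsSignedPerm N w) {r : ℤ} (hr₀ : r ≠ 0) (hr : |r| ≤ N)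
    {m : ℕ} (hm : m ≤ invCount N w) : transitionSum N m r w = 0 := by
  refine sum_eq_zero fun q hq => ?_
  obtain ⟨hq₀, hq⟩ := mem_erase_zero_Icc.1 hq
  rcases eq_or_ne (coverSign r w q) 0 with h | h
  · rw [h, zero_mul]
  · have hlt := hw.invCount_lt_of_coverSign_ne_zero hq₀ hr₀ hq hr h
    rw [(hw.mul (isSignedPerm_signedSwap hq hr)).words_eq_empty (hm.trans_lt hlt), card_empty,
      Nat.cast_zero, mul_zero]

/-- The signs in `sum_sign_sB_sub` cancel only if `|w r|` is smaller than the rank, hence the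
passage from `B_N` to `B_{N+1}`. -/
lemma transitionSum_eq_zero (hw : IsSignedPerm N w) {r : ℤ} (hr₀ : r ≠ 0) (hr : |r| ≤ N) {m : ℕ}
    (hm : m ≤ invCount (N + 1) w + 1) : transitionSum (N + 1) m r w = 0 := by
  induction m generalizing w with
  | zero =>
    exact (hw.mono N.le_succ).transitionSum_eq_zero_of_le hr₀ (by push_cast; omega) (Nat.zero_le _)
  | succ m ih =>
    have hw' : IsSignedPerm (N + 1) w := hw.mono N.le_succ
    have hr' : |r| ≤ (N + 1 : ℕ) := by push_cast; omega
    have hwr := hw.abs_map_le hr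
    rw [hw'.transitionSum_succ hr₀ hr' (by push_cast; omega)]
    refine sum_eq_zero fun k hk => ?_
    rw [mem_range] at hk
    have hsw := (isSignedPerm_sB hk).mul hw'
    rcases hw'.invCount_sB_mul hk with ⟨hdesc, hlen⟩ | ⟨-, hlen⟩
    · have hkN : k < N := by
        by_contra! h
        exact (hw.inv_sBLow_lt_of_le h).not_gt hdesc
      exact ih ((isSignedPerm_sB hkN).mul hw) (by omega)
    · exact hsw.transitionSum_eq_zero_of_le hr₀ hr' (by omega)

end IsSignedPerm

namespace IsSignedPerm

variable {N : ℕ} {w : Equiv.Perm ℤ}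

lemma invCount_add_invCount_sB_mul {u : Equiv.Perm ℤ} (hw : IsSignedPerm N w)
    (hu : IsSignedPerm N u) {k : ℕ} (hk : k < N)
    (h : w⁻¹ (sBLow k) < w⁻¹ (k + 1) ↔ u⁻¹ (sBLow k) < u⁻¹ (k + 1)) :
    invCount N w + invCount N (sB k * u) = invCount N (sB k * w) + invCount N u := by
  have hw' := hw.invCount_sB_mul hk
  have hu' := hu.invCount_sB_mul hk
  omega

lemma invCount_add_invCount_sB_mul_mul_signedSwap (hw : IsSignedPerm N w) {i j : ℤ} (hi₀ : i ≠ 0)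
    (hj₀ : j ≠ 0) (hi : |i| ≤ N) (hj : |j| ≤ N) (hij : i < j) {k : ℕ} (hwi : w i = -(k + 1))
    (hwj : -k < w j) (hneg : w j < 0) (hbetween : ∀ p, i < p → p < j → w p ≠ -k) :
    invCount N w + invCount N (sB k * (w * signedSwap i j)) =
      invCount N (sB k * w) + invCount N (w * signedSwap i j) := by
  have hkN : k < N := by
    have := abs_le.1 (hw.abs_map_le hi)
    omega
  have hlow : sBLow k = k := if_neg (by omega)
  have hv := hw.mul (isSignedPerm_signedSwap hi hj)
  obtain ⟨p, hp⟩ := w.surjective (-k)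
  have hpi : p ≠ i := by rintro rfl; omega
  have hpj : p ≠ j := by rintro rfl; omega
  have hpi' : p ≠ -i := by rintro rfl; rw [hw.map_neg] at hp; omega
  have hpj' : p ≠ -j := by rintro rfl; rw [hw.map_neg] at hp; omega
  have hwinv : w⁻¹ (k + 1) = -i := by rw [Equiv.Perm.inv_eq_iff_eq, hw.map_neg]; omega
  have hwinv' : w⁻¹ k = -p := by rw [Equiv.Perm.inv_eq_iff_eq, hw.map_neg]; omega
  have hvinv : (w * signedSwap i j)⁻¹ (k + 1) = -j := by
    rw [Equiv.Perm.inv_eq_iff_eq, hv.map_neg, Equiv.Perm.mul_apply,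
      signedSwap_apply_right hi₀ hj₀]
    omega
  have hvinv' : (w * signedSwap i j)⁻¹ k = -p := by
    rw [Equiv.Perm.inv_eq_iff_eq, hv.map_neg, Equiv.Perm.mul_apply,
      signedSwap_apply_of_ne hpi hpj hpi' hpj']
    omega
  refine hw.invCount_add_invCount_sB_mul hv hkN ?_
  have hout : ¬(i < p ∧ p < j) := fun h => hbetween p h.1 h.2 hp
  rw [hlow, hwinv, hwinv', hvinv, hvinv']
  omega

/-- The generator that raises the value `w i` by one does not affect the change of length under the
reflection, until `w i` reaches `w j`. -/
lemma invCount_mul_signedSwap_of_cover (hw : IsSignedPerm N w) {i j : ℤ} (hi₀ : i ≠ 0)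
    (hj₀ : j ≠ 0) (hi : |i| ≤ N) (hj : |j| ≤ N) (hij : i < j) (hlt : w i < w j) (hneg : w j < 0)
    (hcover : ∀ p, i < p → p < j → ¬ (w i < w p ∧ w p < w j)) :
    invCount N (w * signedSwap i j) = invCount N w + 1 := by
  induction hd : (w j - w i).toNat generalizing w with
  | zero => omega
  | succ d ih =>
    have hwi := abs_le.1 (hw.abs_map_le hi)
    obtain ⟨k, hk⟩ : ∃ k : ℕ, w i = -(k + 1) := ⟨(-w i - 1).toNat, by omega⟩
    have hkN : k < N := by omega
    have hlow : sBLow k = k := if_neg (by omega)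
    have hui : sB k (w i) = w i + 1 := by rw [sB_apply]; split_ifs <;> omega
    rcases (show w i + 1 ≤ w j by omega).eq_or_lt with hstep | hstep
    · have hwinv : w⁻¹ (k + 1) = -i := by rw [Equiv.Perm.inv_eq_iff_eq, hw.map_neg]; omega
      have hwinv' : w⁻¹ k = -j := by rw [Equiv.Perm.inv_eq_iff_eq, hw.map_neg]; omega
      have hasc := hw.invCount_sB_mul hkN
      rw [hlow, hwinv, hwinv'] at hasc
      rw [hw.mul_signedSwap_eq_sB_mul (hui.trans hstep) hij.ne]
      omega
    have huj : sB k (w j) = w j := by rw [sB_apply]; split_ifs <;> omega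
    have hrec := ih ((isSignedPerm_sB hkN).mul hw)
      (by rw [Equiv.Perm.mul_apply, Equiv.Perm.mul_apply]; omega)
      (by rw [Equiv.Perm.mul_apply]; omega)
      (fun q hiq hqj hq => by
        have hqi := w.injective.ne hiq.ne'
        have hqj' := w.injective.ne hqj.ne
        rw [Equiv.Perm.mul_apply, Equiv.Perm.mul_apply, Equiv.Perm.mul_apply, hui, huj] at hq
        have hqfix : sB k (w q) = w q := by
          rw [sB_apply] at hq ⊢
          split_ifs at * <;> omega
        exact hcover q hiq hqj (by omega))
      (by rw [Equiv.Perm.mul_apply, Equiv.Perm.mul_apply]; omega)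
    have hlen := hw.invCount_add_invCount_sB_mul_mul_signedSwap hi₀ hj₀ hi hj hij hk (by omega)
      hneg fun p h₁ h₂ hp => hcover p h₁ h₂ (by omega)
    rw [mul_assoc] at hrec
    omega

/-- The transition formula when a single reflection contributes on either side. -/
lemma card_RSet_mul_signedSwap_eq (hw : IsSignedPerm N w) {r q₁ q₂ : ℤ} (hr₀ : r ≠ 0)
    (hq₁₀ : q₁ ≠ 0) (hq₂₀ : q₂ ≠ 0) (hr : |r| ≤ N) (hq₁ : |q₁| ≤ N) (hq₂ : |q₂| ≤ N)
    (h₁ : coverSign r w q₁ = -1) (h₂ : coverSign r w q₂ = 1)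
    (hcover : invCount (N + 1) (w * signedSwap q₁ r) = invCount (N + 1) w + 1)
    (hfar : ∀ q : ℤ, q ≠ 0 → |q| ≤ (N + 1 : ℕ) → q ≠ q₁ → q ≠ q₂ → coverSign r w q ≠ 0 →
      invCount (N + 1) w + 1 < invCount (N + 1) (w * signedSwap q r)) :
    Nat.card (RSet N (w * signedSwap q₁ r)) = Nat.card (RSet N (w * signedSwap q₂ r)) := by
  have hw' : IsSignedPerm (N + 1) w := hw.mono N.le_succ
  have hsum := hw.transitionSum_eq_zero hr₀ hr (le_refl (invCount (N + 1) w + 1))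
  have hreflect : ∀ q : ℤ, |q| ≤ (N + 1 : ℕ) → IsSignedPerm (N + 1) (w * signedSwap q r) :=
    fun q hq => hw'.mul (isSignedPerm_signedSwap hq (by push_cast; omega))
  have hr' : |r| ≤ (N + 1 : ℕ) := by push_cast; omega
  have hq₁' : |q₁| ≤ (N + 1 : ℕ) := by push_cast; omega
  have hq₂' : |q₂| ≤ (N + 1 : ℕ) := by push_cast; omega
  have hne : q₁ ≠ q₂ := by rintro rfl; omega
  have hsub : {q₁, q₂} ⊆ (Icc (-((N + 1 : ℕ) : ℤ)) (N + 1 : ℕ)).erase 0 := by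
    rw [insert_subset_iff, singleton_subset_iff, mem_erase_zero_Icc, mem_erase_zero_Icc]
    exact ⟨⟨hq₁₀, hq₁'⟩, hq₂₀, hq₂'⟩
  rw [transitionSum, ← sum_subset hsub, sum_pair hne, h₁, h₂] at hsum
  · have hcard : #(words (N + 1) (invCount (N + 1) w + 1) (w * signedSwap q₁ r)) =
        #(words (N + 1) (invCount (N + 1) w + 1) (w * signedSwap q₂ r)) := by omega
    have hcover₂ : invCount (N + 1) (w * signedSwap q₂ r) = invCount (N + 1) w + 1 := by
      refine le_antisymm ?_
        (hw'.invCount_lt_of_coverSign_ne_zero hq₂₀ hr₀ hq₂' hr' (by omega))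
      by_contra! hgt
      rw [(hreflect q₂ hq₂').words_eq_empty hgt, ← hcover, card_empty, card_eq_zero] at hcard
      exact (hreflect q₁ hq₁').words_invCount_nonempty.ne_empty hcard
    rw [← (hw.mul (isSignedPerm_signedSwap hq₁ hr)).card_RSet_eq_of_le N.le_succ,
      ← (hw.mul (isSignedPerm_signedSwap hq₂ hr)).card_RSet_eq_of_le N.le_succ,
      (hreflect q₁ hq₁').card_RSet, (hreflect q₂ hq₂').card_RSet, hcover₂, hcover, hcard]
  · intro q hq hq'
    obtain ⟨hq₀, hqN⟩ := mem_erase_zero_Icc.1 hq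
    rw [mem_insert, mem_singleton, not_or] at hq'
    rcases eq_or_ne (coverSign r w q) 0 with h | h
    · rw [h, zero_mul]
    · rw [(hreflect q hqN).words_eq_empty (hfar q hq₀ hqN hq'.1 hq'.2 h), card_empty,
        Nat.cast_zero, mul_zero]

end IsSignedPerm

/-- The situation `w = w(1) ⋯ w(m) w(m+1) ⋯`, with the first `m` entries negative and the others
positive and increasing, in which the transition formula at position `r` for
`w * signedSwap r k` has exactly two nonzero terms, coming from the reflections in `(k, r)` and
`(-P, r)`. -/
structure IsTransition (M : ℕ) (w : Equiv.Perm ℤ) (m r k P : ℤ) : Prop where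
  isSignedPerm : IsSignedPerm M w
  map_neg_of_le : ∀ i, 1 ≤ i → i ≤ m → w i < 0
  map_pos_of_lt : ∀ i, m < i → 0 < w i
  map_lt_map_of_lt : ∀ i j, m < i → i < j → w i < w j
  bounds : 1 ≤ r ∧ r < k ∧ k ≤ m ∧ m < P ∧ P ≤ M
  map_lt_map : w k < w r
  map_lt_of_between : ∀ i, r < i → i < k → w i < w k
  lt_map_of_after : ∀ i, k < i → i ≤ m → w r < w i
  lt_map_of_before : ∀ i, 1 ≤ i → i < r → w k < w i
  neg_map_lt : -w k < w P
  map_right_le : ∀ i, m < i → -w k < w i → w P ≤ w i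

namespace IsTransition

variable {M : ℕ} {w : Equiv.Perm ℤ} {m r k P : ℤ}

lemma mul_signedSwap_left (h : IsTransition M w m r k P) : (w * signedSwap r k) r = w k := by
  have hbd := h.bounds
  rw [Equiv.Perm.mul_apply, signedSwap_apply_left (by omega) (by omega)]

lemma mul_signedSwap_right (h : IsTransition M w m r k P) : (w * signedSwap r k) k = w r := by
  have hbd := h.bounds
  rw [Equiv.Perm.mul_apply, signedSwap_apply_right (by omega) (by omega)]

lemma mul_signedSwap_of_ne (h : IsTransition M w m r k P) {i : ℤ} (hi : 1 ≤ i) (hir : i ≠ r)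
    (hik : i ≠ k) : (w * signedSwap r k) i = w i := by
  have hbd := h.bounds
  rw [Equiv.Perm.mul_apply, signedSwap_apply_of_ne hir hik (by omega) (by omega)]

lemma isSignedPerm_mul_signedSwap (h : IsTransition M w m r k P) :
    IsSignedPerm M (w * signedSwap r k) := by
  have hbd := h.bounds
  refine h.isSignedPerm.mul (isSignedPerm_signedSwap ?_ ?_) <;> rw [abs_le] <;> omega

lemma mul_signedSwap_neg_right (h : IsTransition M w m r k P) :
    (w * signedSwap r k) (-P) = -w P := by
  have hbd := h.bounds
  rw [h.isSignedPerm_mul_signedSwap.map_neg,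
    h.mul_signedSwap_of_ne (by omega) (by omega) (by omega)]

lemma mul_signedSwap_neg (h : IsTransition M w m r k P) {i : ℤ} (hi : 1 ≤ i) (him : i ≤ m) :
    (w * signedSwap r k) i < 0 := by
  have hbd := h.bounds
  rcases eq_or_ne i r with rfl | hir
  · exact h.mul_signedSwap_left.trans_lt (h.map_neg_of_le k (by omega) (by omega))
  rcases eq_or_ne i k with rfl | hik
  · exact h.mul_signedSwap_right.trans_lt (h.map_neg_of_le r (by omega) (by omega))
  · exact (h.mul_signedSwap_of_ne hi hir hik).trans_lt (h.map_neg_of_le i hi him)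

lemma invCount_eq (h : IsTransition M w m r k P) :
    invCount (M + 1) w = invCount (M + 1) (w * signedSwap r k) + 1 := by
  have hv : IsSignedPerm (M + 1) (w * signedSwap r k) :=
    h.isSignedPerm_mul_signedSwap.mono M.le_succ
  have hbd := h.bounds
  have hcover := hv.invCount_mul_signedSwap_of_cover (i := r) (j := k) (by omega) (by omega)
    (by rw [abs_le]; omega) (by rw [abs_le]; omega) hbd.2.1
    (by rw [h.mul_signedSwap_left, h.mul_signedSwap_right]; exact h.map_lt_map)
    (h.mul_signedSwap_neg (by omega) (by omega)) (fun p hrp hpk hp => by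
      rw [h.mul_signedSwap_left, h.mul_signedSwap_of_ne (by omega) hrp.ne' hpk.ne] at hp
      exact hp.1.asymm (h.map_lt_of_between p hrp hpk))
  rwa [mul_assoc, signedSwap_mul_self, mul_one] at hcover

lemma lt_invCount_of_lt_left (h : IsTransition M w m r k P) {q : ℤ} (hq₀ : q ≠ 0)
    (hq : |q| ≤ (M + 1 : ℕ)) (hqP : q ≠ -P) (hqr : q < r) (hlt : (w * signedSwap r k) q < w k) :
    invCount (M + 1) (w * signedSwap r k) + 1 <
      invCount (M + 1) (w * signedSwap r k * signedSwap q r) := by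
  have hv : IsSignedPerm (M + 1) (w * signedSwap r k) :=
    h.isSignedPerm_mul_signedSwap.mono M.le_succ
  have hbd := h.bounds
  have hk := h.map_neg_of_le k (by omega) (by omega)
  have hq_neg : q < 0 := by
    by_contra! hq_pos
    rw [h.mul_signedSwap_of_ne (by omega) (by omega) (by omega)] at hlt
    exact hlt.asymm (h.lt_map_of_before q (by omega) hqr)
  have hqv : (w * signedSwap r k) q = -(w * signedSwap r k) (-q) := by rw [hv.map_neg, neg_neg]
  have hmq : m < -q := by
    by_contra! hqm
    have := h.mul_signedSwap_neg (i := -q) (by omega) hqm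
    omega
  rw [h.mul_signedSwap_of_ne (i := -q) (by omega) (by omega) (by omega)] at hqv
  have hPq : P < -q := by
    by_contra! hqP'
    have := h.map_right_le (-q) hmq (by omega)
    have := h.map_lt_map_of_lt (-q) P hmq (by omega)
    omega
  have hmono := h.map_lt_map_of_lt P (-q) (by omega) hPq
  have hP := h.mul_signedSwap_neg_right
  have hr := h.mul_signedSwap_left
  have hPk := h.neg_map_lt
  have := hv.add_three_le_invCount_mul_signedSwap (i := q) (j := r) (p := -P) hq₀ (by omega)
    (by omega) hq (by rw [abs_le]; omega) (by omega) (by omega) (by omega) (by omega) (by omega)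
    (by omega) (by omega)
  omega

lemma lt_invCount_of_lt_right (h : IsTransition M w m r k P) {q : ℤ}
    (hq : |q| ≤ (M + 1 : ℕ)) (hqk : q ≠ k) (hrq : r < q) (hlt : w k < (w * signedSwap r k) q) :
    invCount (M + 1) (w * signedSwap r k) + 1 <
      invCount (M + 1) (w * signedSwap r k * signedSwap q r) := by
  have hv : IsSignedPerm (M + 1) (w * signedSwap r k) :=
    h.isSignedPerm_mul_signedSwap.mono M.le_succ
  have hbd := h.bounds
  have hqv := h.mul_signedSwap_of_ne (i := q) (by omega) (by omega) hqk
  have hkq : k < q := by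
    by_contra! hqk'
    have := h.map_lt_of_between q hrq (by omega)
    omega
  have hwq : w r < w q := by
    by_cases hqm : q ≤ m
    · exact h.lt_map_of_after q hkq hqm
    · exact (h.map_neg_of_le r (by omega) (by omega)).trans (h.map_pos_of_lt q (by omega))
  have hr := h.mul_signedSwap_left
  have hk := h.mul_signedSwap_right
  have hkr := h.map_lt_map
  have := hv.add_three_le_invCount_mul_signedSwap (i := r) (j := q) (p := k) (by omega) (by omega)
    (by omega) (by rw [abs_le]; omega) hq (by omega) hkq (by omega) (by omega) (by omega)
    (by omega) (by omega)
  rw [signedSwap_comm q r]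
  omega

lemma card_RSet_eq (h : IsTransition M w m r k P) :
    Nat.card (RSet M (w * signedSwap r k * signedSwap (-P) r)) = Nat.card (RSet M w) := by
  have hbd := h.bounds
  have hk := h.mul_signedSwap_right
  have hr := h.mul_signedSwap_left
  have hP := h.mul_signedSwap_neg_right
  have hkr := h.map_lt_map
  have hkP := h.neg_map_lt
  have hback : w * signedSwap r k * signedSwap k r = w := by
    rw [signedSwap_comm k r, mul_assoc, signedSwap_mul_self, mul_one]
  have hcard := h.isSignedPerm_mul_signedSwap.card_RSet_mul_signedSwap_eq (r := r) (q₁ := k)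
    (q₂ := -P) (by omega) (by omega) (by omega) (by rw [abs_le]; omega) (by rw [abs_le]; omega)
    (by rw [abs_le]; omega)
    (by rw [coverSign, hk, hr]; split_ifs <;> omega)
    (by rw [coverSign, hP, hr]; split_ifs <;> omega)
    (by rw [hback, h.invCount_eq])
    (fun q hq₀ hq hqk hqP hsign => by
      rw [coverSign, hr] at hsign
      split_ifs at hsign with hleft hright
      · exact h.lt_invCount_of_lt_left hq₀ hq hqP hleft.1 hleft.2
      · exact h.lt_invCount_of_lt_right hq hqk hright.1 hright.2
      · exact absurd rfl hsign)
  rw [← hcard, hback]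

lemma mul_mul_apply (h : IsTransition M w m r k P) {i : ℤ} (hi : 1 ≤ i) :
    (w * signedSwap r k * signedSwap (-P) r) i =
      if i = r then -w P else if i = k then w r else if i = P then -w k else w i := by
  have hbd := h.bounds
  rw [Equiv.Perm.mul_apply]
  split_ifs with hir hik hiP
  · rw [hir, signedSwap_apply_right (by omega) (by omega), h.mul_signedSwap_neg_right]
  · rw [signedSwap_apply_of_ne (by omega) hir (by omega) (by omega), hik, h.mul_signedSwap_right]
  · have hP : signedSwap (-P) r P = -r := by rw [signedSwap_apply]; split_ifs <;> omega
    rw [hiP, hP, h.isSignedPerm_mul_signedSwap.map_neg, h.mul_signedSwap_left]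
  · rw [signedSwap_apply_of_ne (by omega) hir (by omega) (by omega),
      h.mul_signedSwap_of_ne hi hir hik]

end IsTransition

/-- The entries of `w` at the positions `s, s + 1, …` are the negatives of those of the list. -/
def IsNegSegment (w : Equiv.Perm ℤ) : ℤ → List ℕ → Prop
  | _, [] => True
  | s, a :: b => w s = -(a : ℤ) ∧ IsNegSegment w (s + 1) b

namespace IsNegSegment

variable {w w' : Equiv.Perm ℤ} {a : List ℕ} {s : ℤ}

lemma append_iff {b : List ℕ} : IsNegSegment w s (a ++ b) ↔
    IsNegSegment w s a ∧ IsNegSegment w (s + a.length) b := by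
  induction a generalizing s with
  | nil => simp [IsNegSegment]
  | cons x a ih =>
    simp only [List.cons_append, IsNegSegment, ih, List.length_cons, and_assoc, Nat.cast_add,
      Nat.cast_one, add_assoc, add_comm (1 : ℤ)]

lemma congr (ha : IsNegSegment w s a) (h : ∀ i, s ≤ i → i < s + a.length → w' i = w i) :
    IsNegSegment w' s a := by
  induction a generalizing s with
  | nil => trivial
  | cons x a ih =>
    rw [List.length_cons] at h
    exact ⟨(h s le_rfl (by omega)).trans ha.1, ih ha.2 fun i h₁ h₂ => h i (by omega) (by omega)⟩

lemma exists_map_eq (ha : IsNegSegment w s a) {x : ℕ} (hx : x ∈ a) :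
    ∃ i, s ≤ i ∧ i < s + a.length ∧ w i = -(x : ℤ) := by
  induction a generalizing s with
  | nil => simp at hx
  | cons y a ih =>
    rw [List.length_cons]
    rcases List.mem_cons.1 hx with rfl | hx
    · exact ⟨s, le_rfl, by omega, ha.1⟩
    · obtain ⟨i, h₁, h₂, hi⟩ := ih ha.2 hx
      exact ⟨i, by omega, by omega, hi⟩

lemma exists_mem (ha : IsNegSegment w s a) {i : ℤ} (h₁ : s ≤ i) (h₂ : i < s + a.length) :
    ∃ x ∈ a, w i = -(x : ℤ) := by
  induction a generalizing s with
  | nil => simp at h₂; omega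
  | cons y a ih =>
    rw [List.length_cons] at h₂
    rcases h₁.eq_or_lt with rfl | h₁
    · exact ⟨y, List.mem_cons_self, ha.1⟩
    · obtain ⟨x, hx, hi⟩ := ih ha.2 (by omega) (by omega)
      exact ⟨x, List.mem_cons_of_mem y hx, hi⟩

end IsNegSegment

/-- The one-line notation of `w ∈ B_M` consists of the negatives of the list `b` followed by
increasing positive values. -/
structure HasNegPrefix (M : ℕ) (w : Equiv.Perm ℤ) (b : List ℕ) : Prop where
  isSignedPerm : IsSignedPerm M w
  pos_of_mem : ∀ a ∈ b, 0 < a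
  isNegSegment : IsNegSegment w 1 b
  map_pos : ∀ i : ℤ, b.length < i → 0 < w i
  map_lt_map : ∀ i j : ℤ, b.length < i → i < j → w i < w j

namespace HasNegPrefix

variable {M : ℕ} {w : Equiv.Perm ℤ} {b : List ℕ}

lemma mono (h : HasNegPrefix M w b) {N : ℕ} (hMN : M ≤ N) : HasNegPrefix N w b :=
  { h with isSignedPerm := h.isSignedPerm.mono hMN }

lemma map_neg (h : HasNegPrefix M w b) {i : ℤ} (hi : 1 ≤ i) (hib : i ≤ b.length) : w i < 0 := by
  obtain ⟨x, hx, hwi⟩ := h.isNegSegment.exists_mem hi (by omega)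
  have := h.pos_of_mem x hx
  omega

lemma exists_map_eq (h : HasNegPrefix M w b) {c : ℕ} (hc₀ : 0 < c) (hc : c ∉ b) (hcM : c ≤ M) :
    ∃ P : ℤ, b.length < P ∧ P ≤ M ∧ w P = c := by
  obtain ⟨P, hP⟩ := w.surjective c
  have hPM : |P| ≤ M := by
    by_contra! hMP
    rw [h.isSignedPerm.map_of_lt_abs hMP] at hP
    rw [hP, Nat.abs_cast] at hMP
    omega
  have hneg := h.isSignedPerm.map_neg P
  refine ⟨P, ?_, (le_abs_self P).trans hPM, hP⟩
  by_contra! hPb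
  rcases lt_trichotomy P 0 with hP₀ | rfl | hP₀
  · have hPb' : -P ≤ b.length := by
      by_contra! hPb'
      have := h.map_pos (-P) hPb'
      omega
    obtain ⟨x, hx, hwx⟩ := h.isNegSegment.exists_mem (i := -P) (by omega) (by omega)
    exact hc (by rwa [show c = x by omega])
  · rw [h.isSignedPerm.map_zero] at hP
    omega
  · have := h.map_neg (i := P) (by omega) hPb
    omega

lemma map_le_of_forall_mem (h : HasNegPrefix M w b) {z c : ℕ}
    (hzc : ∀ y, z < y → y < c → y ∈ b) {i : ℤ} (hi : b.length < i) (hzi : z < w i) :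
    c ≤ w i := by
  by_contra! hic
  obtain ⟨j, hj₁, -, hj⟩ :=
    h.isNegSegment.exists_map_eq (hzc (w i).toNat (by omega) (by omega))
  have hneg := h.isSignedPerm.map_neg j
  have : -j = i := w.injective (by omega)
  omega

variable {p e f : List ℕ} {x z c : ℕ}

lemma isTransition (h : HasNegPrefix M w (p ++ x :: (e ++ z :: f))) (hxz : x < z) (hzc : z < c)
    (hp : ∀ a ∈ p, a < z) (he : ∀ a ∈ e, z < a) (hf : ∀ a ∈ f, a < x)
    (hc : ∀ y, z < y → y < c → y ∈ p ++ x :: (e ++ z :: f)) {P : ℤ}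
    (hPb : (p ++ x :: (e ++ z :: f)).length < P) (hPM : P ≤ M) (hP : w P = c) :
    IsTransition M w (p ++ x :: (e ++ z :: f)).length (1 + p.length)
      (1 + p.length + 1 + e.length) P := by
  have hpref := h.isNegSegment
  rw [IsNegSegment.append_iff, IsNegSegment, IsNegSegment.append_iff, IsNegSegment] at hpref
  obtain ⟨hpseg, hx, heseg, hz, hfseg⟩ := hpref
  have hlen : (p ++ x :: (e ++ z :: f)).length = p.length + e.length + f.length + 2 := by
    simp only [List.length_append, List.length_cons]; omega
  refine ⟨h.isSignedPerm, fun i => h.map_neg, h.map_pos, h.map_lt_map, by omega, by omega,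
    fun i h₁ h₂ => ?_, fun i h₁ h₂ => ?_, fun i h₁ h₂ => ?_, by omega, fun i h₁ h₂ => ?_⟩
  · obtain ⟨y, hy, hi⟩ := heseg.exists_mem (i := i) (by omega) (by omega)
    have := he y hy
    omega
  · obtain ⟨y, hy, hi⟩ := hfseg.exists_mem (i := i) (by omega) (by omega)
    have := hf y hy
    omega
  · obtain ⟨y, hy, hi⟩ := hpseg.exists_mem (i := i) (by omega) (by omega)
    have := hp y hy
    omega
  · rw [hP]
    exact h.map_le_of_forall_mem hc h₁ (by omega)

lemma mul_mul_of_isTransition (h : HasNegPrefix M w (p ++ x :: (e ++ z :: f))) (hzc : z < c)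
    {P : ℤ} (hP : w P = c)
    (ht : IsTransition M w (p ++ x :: (e ++ z :: f)).length (1 + p.length)
      (1 + p.length + 1 + e.length) P) :
    HasNegPrefix M (w * signedSwap (1 + p.length) (1 + p.length + 1 + e.length) *
      signedSwap (-P) (1 + p.length)) (p ++ c :: (e ++ x :: f)) := by
  have hpref := h.isNegSegment
  rw [IsNegSegment.append_iff, IsNegSegment, IsNegSegment.append_iff, IsNegSegment] at hpref
  obtain ⟨hpseg, hx, heseg, hz, hfseg⟩ := hpref
  have hlen : (p ++ x :: (e ++ z :: f)).length = p.length + e.length + f.length + 2 := by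
    simp only [List.length_append, List.length_cons]; omega
  have hlen' : (p ++ c :: (e ++ x :: f)).length = (p ++ x :: (e ++ z :: f)).length := by simp
  have happly := fun i => ht.mul_mul_apply (i := i)
  have hbd := ht.bounds
  have hkr := ht.map_lt_map
  have hkP := ht.neg_map_lt
  refine ⟨ht.isSignedPerm_mul_signedSwap.mul (isSignedPerm_signedSwap ?_ ?_), fun a ha => ?_, ?_,
    fun i hi => ?_, fun i j hi hij => ?_⟩
  · rw [abs_le]; omega
  · rw [abs_le]; omega
  · have := h.pos_of_mem
    simp only [List.mem_append, List.mem_cons] at ha this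
    rcases ha with ha | rfl | ha | rfl | ha
    · exact this a (by simp [ha])
    · omega
    all_goals exact this a (by simp [*])
  · rw [IsNegSegment.append_iff, IsNegSegment, IsNegSegment.append_iff, IsNegSegment]
    refine ⟨hpseg.congr fun i h₁ h₂ => ?_, ?_, heseg.congr fun i h₁ h₂ => ?_, ?_,
      hfseg.congr fun i h₁ h₂ => ?_⟩ <;>
    · rw [happly _ (by omega)]
      split_ifs <;> omega
  · have := h.map_pos i (by omega)
    rw [happly _ (by omega)]
    split_ifs <;> omega
  · have hi' := h.map_lt_map i j (by omega) hij
    have hmin := ht.map_right_le i (by omega)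
    have hne : w i ≠ -w (1 + p.length + 1 + e.length) := by
      rw [← h.isSignedPerm.map_neg]
      exact w.injective.ne (by omega)
    rw [happly i (by omega), happly j (by omega)]
    rcases eq_or_ne i P with rfl | hiP
    · split_ifs <;> omega
    rcases eq_or_ne j P with rfl | hjP <;> split_ifs <;> omega

end HasNegPrefix

/-- Every signed permutation with negative prefix `b` has as many reduced words as some signed
permutation with negative prefix `b'`. -/
def Transfers (b b' : List ℕ) : Prop :=
  ∀ M w, HasNegPrefix M w b →
    ∃ M' w', HasNegPrefix M' w' b' ∧ Nat.card (RSet M' w') = Nat.card (RSet M w)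

namespace Transfers

lemma refl (b : List ℕ) : Transfers b b := fun M w h => ⟨M, w, h, rfl⟩

lemma trans {a b c : List ℕ} (hab : Transfers a b) (hbc : Transfers b c) : Transfers a c := by
  intro M w hw
  obtain ⟨M₁, w₁, hw₁, hcard₁⟩ := hab M w hw
  obtain ⟨M₂, w₂, hw₂, hcard₂⟩ := hbc M₁ w₁ hw₁
  exact ⟨M₂, w₂, hw₂, hcard₂.trans hcard₁⟩

lemma of_isLeast {p e f : List ℕ} {x z c : ℕ} (hxz : x < z) (hp : ∀ a ∈ p, a < z)
    (he : ∀ a ∈ e, z < a) (hf : ∀ a ∈ f, a < x)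
    (hc : IsLeast {y | z < y ∧ y ∉ p ++ x :: (e ++ z :: f)} c) :
    Transfers (p ++ x :: (e ++ z :: f)) (p ++ c :: (e ++ x :: f)) := by
  intro M w hw
  obtain ⟨⟨hzc, hcb⟩, hmin⟩ := hc
  have hw' := hw.mono (le_max_left M c)
  obtain ⟨P, hPb, hPM, hP⟩ := hw'.exists_map_eq (by omega) hcb (le_max_right M c)
  have ht := hw'.isTransition hxz hzc hp he hf
    (fun y hzy hyc => by_contra fun hy => (hmin ⟨hzy, hy⟩).not_gt hyc) hPb hPM hP
  exact ⟨_, _, hw'.mul_mul_of_isTransition hzc hP ht,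
    ht.card_RSet_eq.trans (hw.isSignedPerm.card_RSet_eq_of_le (le_max_left M c))⟩

end Transfers

/-- The list `[2n - 1, …, 3, 1]`. -/
def oddsDesc : ℕ → List ℕ
  | 0 => []
  | n + 1 => (2 * n + 1) :: oddsDesc n

lemma mem_oddsDesc {n a : ℕ} : a ∈ oddsDesc n ↔ a < 2 * n ∧ a % 2 = 1 := by
  induction n with
  | zero => simp [oddsDesc]
  | succ n ih => rw [oddsDesc, List.mem_cons, ih]; omega

lemma pairwise_oddsDesc (n : ℕ) : (oddsDesc n).Pairwise (· > ·) := by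
  induction n with
  | zero => exact List.Pairwise.nil
  | succ n ih => exact List.pairwise_cons.2 ⟨fun a ha => by rw [mem_oddsDesc] at ha; omega, ih⟩

lemma pairwise_map_add {e : List ℕ} (he : e.Pairwise (· > ·)) (q : ℕ) :
    (e.map (· + q)).Pairwise (· > ·) :=
  List.pairwise_map.2 (he.imp fun h => Nat.add_lt_add_right h q)

lemma map_add_map_add (e : List ℕ) (q r : ℕ) :
    (e.map (· + q)).map (· + r) = e.map (· + (q + r)) := by
  simp only [List.map_map, Function.comp_def, add_assoc]

lemma exists_eq_append_reverse_range' {e : List ℕ} (he : e.Pairwise (· > ·)) (hne : e ≠ []) :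
    ∃ e' z l, e = e' ++ (List.range' z (l + 1)).reverse ∧ ∀ a ∈ e', z + l + 1 < a := by
  induction e with
  | nil => exact absurd rfl hne
  | cons a e ih =>
    obtain ⟨hae, he⟩ := List.pairwise_cons.1 he
    rcases eq_or_ne e [] with rfl | hne'
    · exact ⟨[], a, 0, by simp, by simp⟩
    obtain ⟨e', z, l, rfl, he'⟩ := ih he hne'
    have hlt : ∀ b ∈ e', b < a := fun b hb => hae b (List.mem_append_left _ hb)
    have hzl : z + l < a := hae _ (by simp)
    by_cases hrun : a = z + l + 1 ∧ e' = []
    · obtain ⟨rfl, rfl⟩ := hrun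
      exact ⟨[], z, l + 1, by
        simp [List.range'_1_concat (n := l + 1), add_assoc], by simp⟩
    · refine ⟨a :: e', z, l, by simp, List.forall_mem_cons.2 ⟨?_, he'⟩⟩
      rcases e'.eq_nil_or_concat with rfl | ⟨e'', b, rfl⟩
      · simp only [and_true] at hrun
        omega
      · exact (he' b (by simp)).trans (hlt b (by simp))

namespace Transfers

lemma cons_append_range' {p e f : List ℕ} {x z l : ℕ} (hp : ∀ a ∈ p, a < z) (hxz : x < z)
    (he : ∀ a ∈ e, z + l + 1 < a) (hf : ∀ a ∈ f, a < x) :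
    Transfers (p ++ x :: (e ++ ((List.range' z (l + 1)).reverse ++ f)))
      (p ++ (z + l + 1) :: (e ++ ((List.range' (z + 1) l).reverse ++ x :: f))) := by
  have h := of_isLeast (p := p) (e := e ++ (List.range' (z + 1) l).reverse) (f := f) (x := x)
    (z := z) (c := z + l + 1) hxz hp (fun a ha => ?_) hf ⟨⟨by omega, fun hmem => ?_⟩, ?_⟩
  · simpa [List.range'_succ] using h
  · simp only [List.mem_append, List.mem_reverse, List.mem_range'_1] at ha
    rcases ha with ha | ha
    · have := he a ha; omega
    · omega
  · simp only [List.mem_append, List.mem_cons, List.mem_reverse, List.mem_range'_1] at hmem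
    rcases hmem with h | h | (h | h) | h | h
    · have := hp _ h; omega
    · omega
    · have := he _ h; omega
    · omega
    · omega
    · have := hf _ h; omega
  · rintro y ⟨hzy, hy⟩
    simp only [List.mem_append, List.mem_cons, List.mem_reverse, List.mem_range'_1] at hy
    omega

/-- The maximal runs of consecutive values of `e` are passed one at a time, from the right: passing
a run turns `x` into the successor of its largest value. -/
lemma cons_append {p e f : List ℕ} {x : ℕ} (he : e.Pairwise (· > ·))
    (hp : ∀ a ∈ p, ∀ b ∈ e, a < b) (hx : ∀ b ∈ e, x < b) (hf : ∀ a ∈ f, a < x) :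
    Transfers (p ++ x :: (e ++ f)) (p ++ (e.map (· + 1) ++ x :: f)) := by
  induction hlen : e.length using Nat.strong_induction_on generalizing e f x with
  | _ L ih =>
  rcases eq_or_ne e [] with rfl | hne
  · exact refl _
  obtain ⟨e', z, l, rfl, he'⟩ := exists_eq_append_reverse_range' he hne
  have hmap : (List.range' z (l + 1)).reverse.map (· + 1) =
      (z + l + 1) :: (List.range' (z + 1) l).reverse := by
    rw [List.map_reverse, ← List.range'_succ_left, List.range'_1_concat]
    simp; omega
  have hz : z ∈ e' ++ (List.range' z (l + 1)).reverse := by simp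
  have hrun := cons_append_range' (fun a ha => hp a ha z hz) (hx z hz) he' hf
  have hrest := ih e'.length (by rw [← hlen]; simp) (x := z + l + 1)
    (f := (List.range' (z + 1) l).reverse ++ x :: f) (List.pairwise_append.1 he).1
    (fun a ha b hb => hp a ha b (by simp [hb])) he' (fun a ha => by
      have hxz := hx z hz
      simp only [List.mem_append, List.mem_cons, List.mem_reverse, List.mem_range'_1] at ha
      rcases ha with ha | rfl | ha
      · omega
      · omega
      · have := hf a ha; omega) rfl
  rw [List.map_append, hmap]
  simp only [List.append_assoc, List.cons_append] at hrun hrest ⊢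
  exact hrun.trans hrest

lemma append_comm {p d e f : List ℕ} (hd : d.Pairwise (· > ·)) (he : e.Pairwise (· > ·))
    (hp : ∀ a ∈ p, ∀ b ∈ e, a < b) (hde : ∀ a ∈ d, ∀ b ∈ e, a < b)
    (hf : ∀ a ∈ f, ∀ b ∈ d, a < b) :
    Transfers (p ++ (d ++ (e ++ f))) (p ++ (e.map (· + d.length) ++ (d ++ f))) := by
  induction d generalizing p with
  | nil => simpa using refl _
  | cons x d ih =>
    rw [List.pairwise_cons] at hd
    rw [List.forall_mem_cons] at hde
    simp only [List.forall_mem_cons] at hf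
    have hrest := ih (p := p ++ [x]) hd.2
      (fun a ha b hb => by
        rcases List.mem_append.1 ha with ha | ha
        · exact hp a ha b hb
        · rw [List.mem_singleton.1 ha]; exact hde.1 b hb)
      hde.2 (fun a ha => (hf a ha).2)
    have hlast := cons_append (p := p) (x := x) (f := d ++ f) (pairwise_map_add he d.length)
      (fun a ha b hb => by
        obtain ⟨c, hc, rfl⟩ := List.mem_map.1 hb
        have := hp a ha c hc
        omega)
      (fun b hb => by
        obtain ⟨c, hc, rfl⟩ := List.mem_map.1 hb
        have := hde.1 c hc
        omega)
      (fun a ha => (List.mem_append.1 ha).elim (hd.1 a) fun ha => (hf a ha).1)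
    rw [map_add_map_add] at hlast
    simp only [List.append_assoc, List.cons_append, List.nil_append] at hrest ⊢
    exact hrest.trans hlast

/-- Inserting `j + q`, …, `j + 1` one after the other into the decreasing list on the right. -/
lemma range'_append {p : List ℕ} {j : ℕ} (hp : ∀ a ∈ p, a ≤ j) {q : ℕ} {e : List ℕ}
    (he : e.Pairwise (· > ·)) (hje : ∀ b ∈ e, j + q < b) :
    Transfers (p ++ (List.range' (j + 1) q ++ e))
      (p ++ (e.map (· + q) ++ (oddsDesc q).map (· + j))) := by
  induction q generalizing e with
  | zero => simpa [oddsDesc] using refl _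
  | succ q ih =>
    have hfirst := cons_append (p := p ++ List.range' (j + 1) q) (x := j + 1 + q) (f := []) he
      (fun a ha b hb => by
        have := hje b hb
        rcases List.mem_append.1 ha with ha | ha
        · have := hp a ha; omega
        · rw [List.mem_range'_1] at ha; omega)
      (fun b hb => by have := hje b hb; omega) (by simp)
    have hlt : ∀ b ∈ e.map (· + 1), j + 1 + q < b := fun b hb => by
      obtain ⟨c, hc, rfl⟩ := List.mem_map.1 hb
      have := hje c hc
      omega
    have hrest := ih (e := e.map (· + 1) ++ [j + 1 + q])
      (List.pairwise_append.2 ⟨pairwise_map_add he 1, List.pairwise_singleton _ _,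
        fun a ha b hb => by rw [List.mem_singleton.1 hb]; exact hlt a ha⟩)
      (fun b hb => by
        rcases List.mem_append.1 hb with hb | hb
        · have := hlt b hb; omega
        · rw [List.mem_singleton.1 hb]; omega)
    rw [List.range'_1_concat]
    have hnew : j + 1 + q + q = 2 * q + 1 + j := by omega
    simp only [List.map_append, map_add_map_add, List.map_cons, List.map_nil, oddsDesc, hnew,
      List.append_assoc, List.cons_append, List.nil_append, List.append_nil,
      add_comm 1 q] at hfirst hrest ⊢
    exact hfirst.trans hrest

lemma range'_one (n : ℕ) : Transfers (List.range' 1 n) (oddsDesc n) := by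
  simpa using range'_append (p := []) (j := 0) (q := n) (e := []) (by simp) List.Pairwise.nil
    (by simp)

lemma range'_append_three (i t : ℕ) :
    Transfers (List.range' 1 i ++ ([i + 3, i + 2, i + 1] ++ List.range' (i + 4) t))
      ((oddsDesc t).map (· + (2 * i + 6)) ++
        ([2 * i + 3, 2 * i + 2, 2 * i + 1] ++ oddsDesc i)) := by
  have hlt : ∀ s, ∀ b ∈ (oddsDesc t).map (· + s), s < b := fun s b hb => by
    obtain ⟨a, ha, rfl⟩ := List.mem_map.1 hb
    rw [mem_oddsDesc] at ha
    omega
  have hpre : ∀ a ∈ List.range' 1 i, a ≤ i := fun a ha => by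
    rw [List.mem_range'_1] at ha
    omega
  have hmid : ∀ a ∈ [i + 3, i + 2, i + 1], i < a ∧ a ≤ i + 3 := by simp
  have htail := range'_append (p := List.range' 1 i ++ [i + 3, i + 2, i + 1]) (j := i + 3)
    (q := t) (e := []) (fun a ha => (List.mem_append.1 ha).elim
      (fun ha => (hpre a ha).trans (by omega)) fun ha => (hmid a ha).2) List.Pairwise.nil (by simp)
  have hcomm := append_comm (p := List.range' 1 i) (d := [i + 3, i + 2, i + 1])
    (e := (oddsDesc t).map (· + (i + 3))) (f := []) (by simp)
    (pairwise_map_add (pairwise_oddsDesc t) _)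
    (fun a ha b hb => by have := hpre a ha; have := hlt _ b hb; omega)
    (fun a ha b hb => by have := hmid a ha; have := hlt _ b hb; omega) (by simp)
  have hhead := range'_append (p := []) (j := 0) (q := i)
    (e := (oddsDesc t).map (· + (i + 6)) ++ [i + 3, i + 2, i + 1]) (by simp)
    (List.pairwise_append.2 ⟨pairwise_map_add (pairwise_oddsDesc t) _, by simp,
      fun a ha b hb => by have := hmid b hb; have := hlt _ a ha; omega⟩)
    (fun b hb => (List.mem_append.1 hb).elim
      (fun hb => by have := hlt _ b hb; omega) fun hb => by have := hmid b hb; omega)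
  have h₆ : i + 6 + i = 2 * i + 6 := by omega
  have h₃ : i + 3 + i = 2 * i + 3 := by omega
  have h₂ : i + 2 + i = 2 * i + 2 := by omega
  have h₁ : i + 1 + i = 2 * i + 1 := by omega
  simp only [List.map_append, map_add_map_add, List.map_cons, List.map_nil, List.length_cons,
    List.length_nil, List.append_assoc, List.cons_append, List.nil_append, List.append_nil,
    zero_add, add_zero, List.map_id', add_assoc, Nat.reduceAdd] at htail hcomm hhead h₆ h₃ h₂ h₁ ⊢
  rw [h₆, h₃, h₂, h₁] at hhead
  exact (htail.trans hcomm).trans hhead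

end Transfers

lemma IsNegSegment.range' {w : Equiv.Perm ℤ} {s q : ℕ}
    (h : ∀ i : ℕ, s ≤ i → i < s + q → w i = -(i : ℤ)) : IsNegSegment w s (List.range' s q) := by
  induction q generalizing s with
  | zero => trivial
  | succ q ih =>
    refine ⟨h s le_rfl (by omega), ?_⟩
    exact_mod_cast ih (s := s + 1) fun i h₁ h₂ => h i (by omega) (by omega)

lemma hasNegPrefix_w0B (n : ℕ) : HasNegPrefix n (w0B n) (List.range' 1 n) := by
  have h : ∀ x, w0B n x = w0BFun n x := fun _ => rfl
  refine ⟨⟨fun x => ?_, fun x hx => ?_⟩, fun a ha => ?_,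
    IsNegSegment.range' (s := 1) fun i h₁ h₂ => ?_, fun i hi => ?_, fun i j hi hij => ?_⟩
  case refine_3 => rw [List.mem_range'_1] at ha; omega
  all_goals
    simp only [List.length_range', h, w0BFun] at *
    split_ifs <;> omega

lemma hasNegPrefix_of_eq_wkFun {i t : ℕ} {w : Equiv.Perm ℤ}
    (h : ∀ x, w x = wkFun (i + 3 + t) (i + 1) x) :
    HasNegPrefix (i + 3 + t) w
      (List.range' 1 i ++ ([i + 3, i + 2, i + 1] ++ List.range' (i + 4) t)) := by
  have hlen : (List.range' 1 i ++ ([i + 3, i + 2, i + 1] ++ List.range' (i + 4) t)).length =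
      i + 3 + t := by
    simp only [List.length_append, List.length_range', List.length_cons, List.length_nil]; omega
  refine ⟨⟨fun x => ?_, fun x hx => ?_⟩, fun a ha => ?_, ?_, fun x hx => ?_, fun x y hx hxy => ?_⟩
  case refine_3 =>
    simp only [List.mem_append, List.mem_range'_1, List.mem_cons, List.not_mem_nil, or_false] at ha
    omega
  case refine_4 =>
    have htail : IsNegSegment w (i + 4 : ℕ) (List.range' (i + 4) t) := by
      refine IsNegSegment.range' fun x h₁ h₂ => ?_
      rw [h, wkFun]
      split_ifs <;> omega
    rw [IsNegSegment.append_iff, IsNegSegment.append_iff, List.length_range']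
    refine ⟨IsNegSegment.range' (s := 1) fun x h₁ h₂ => ?_, ⟨?_, ?_, ?_, trivial⟩, ?_⟩
    case refine_5 => convert htail using 1; simp only [List.length_cons, List.length_nil]; omega
    all_goals
      rw [h, wkFun]
      split_ifs <;> omega
  all_goals
    simp only [hlen, h, wkFun] at *
    split_ifs <;> omega

section Interpolation

open Polynomial Lagrange

variable {ι : Type*}

lemma coeff_succ_X_sq_mul_nodal_insert {R : Type*} [CommRing R] [DecidableEq ι] (a : ι → R)
    {s : Finset ι} {i : ι} (hi : i ∉ s) (m : ℕ) :
    (X ^ 2 * nodal (insert i s) a).coeff (m + 1) =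
      (X ^ 2 * nodal s a).coeff m - a i * (X ^ 2 * nodal s a).coeff (m + 1) := by
  rw [nodal_insert_eq_nodal hi, mul_left_comm, sub_mul, coeff_sub, coeff_X_mul, coeff_C_mul]

-- The factor `X ^ 2` keeps the index `s.card - 2` of the third coefficient from being truncated.
lemma coeff_X_sq_mul_nodal {R : Type*} [CommRing R] (s : Finset ι) (a : ι → R) :
    (∀ m, s.card + 2 < m → (X ^ 2 * nodal s a).coeff m = 0) ∧
    (X ^ 2 * nodal s a).coeff (s.card + 2) = 1 ∧
    (X ^ 2 * nodal s a).coeff (s.card + 1) = -∑ j ∈ s, a j ∧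
    2 * (X ^ 2 * nodal s a).coeff s.card = (∑ j ∈ s, a j) ^ 2 - ∑ j ∈ s, a j ^ 2 := by
  classical
  induction s using Finset.induction_on with
  | empty =>
    simp only [nodal_empty, mul_one, card_empty, coeff_X_pow, sum_empty]
    exact ⟨fun m hm => if_neg (by omega), by simp⟩
  | insert i s hi ih =>
    obtain ⟨h₀, h₁, h₂, h₃⟩ := ih
    have hc := coeff_succ_X_sq_mul_nodal_insert a hi
    rw [card_insert_of_notMem hi, sum_insert hi, sum_insert hi]
    refine ⟨fun m hm => ?_, ?_, ?_, ?_⟩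
    · obtain ⟨m, rfl⟩ := Nat.exists_eq_succ_of_ne_zero (by omega : m ≠ 0)
      rw [hc, h₀ m (by omega), h₀ (m + 1) (by omega), mul_zero, sub_zero]
    · rw [add_right_comm, hc, h₁, h₀ _ (by omega), mul_zero, sub_zero]
    · rw [hc, h₂, h₁]
      ring
    · rw [hc, mul_sub, h₃, h₂]
      ring

lemma coeff_add_C_mul_nodal {R : Type*} [CommRing R] (s : Finset ι) (a : ι → R) (β : R) (m : ℕ) :
    ((X + C β) * nodal s a).coeff m =
      (X ^ 2 * nodal s a).coeff (m + 1) + β * (X ^ 2 * nodal s a).coeff (m + 2) := by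
  rw [← coeff_X_pow_mul _ 2 m, mul_left_comm, add_mul, coeff_add, coeff_X_mul, coeff_C_mul]

lemma degree_add_C_mul_nodal_sub_lt {R : Type*} [CommRing R] (s : Finset ι) (Y Z : ι → R) (β : R) :
    ((X + C β) * nodal s Z - (X + C (β - ∑ j ∈ s, Z j + ∑ j ∈ s, Y j)) * nodal s Y).degree <
      (s.card : WithBot ℕ) := by
  obtain ⟨p₀, p₁, p₂, -⟩ := coeff_X_sq_mul_nodal s Z
  obtain ⟨q₀, q₁, q₂, -⟩ := coeff_X_sq_mul_nodal s Y
  refine (degree_lt_iff_coeff_zero _ _).2 fun m hm => ?_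
  rw [coeff_sub, coeff_add_C_mul_nodal, coeff_add_C_mul_nodal]
  obtain rfl | rfl | hm : m = s.card ∨ m = s.card + 1 ∨ s.card + 1 < m := by omega
  · rw [p₁, p₂, q₁, q₂]
    ring
  · rw [p₀ (s.card + 1 + 2) (by omega), q₀ (s.card + 1 + 2) (by omega), add_assoc, p₁, q₁]
    ring
  · rw [p₀ _ (by omega), p₀ _ (by omega), q₀ _ (by omega), q₀ _ (by omega)]
    ring

variable {K : Type*} [Field K] [DecidableEq ι] (s : Finset ι) {Y : ι → K} (Z : ι → K)

lemma sum_prod_div_prod_erase (hY : Set.InjOn Y s) :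
    ∑ i ∈ s, (∏ j ∈ s, (Y i - Z j)) / ∏ j ∈ s.erase i, (Y i - Y j) =
      ∑ j ∈ s, Y j - ∑ j ∈ s, Z j := by
  rcases s.eq_empty_or_nonempty with rfl | hs
  · simp
  have hdegree : (nodal s Z - nodal s Y).degree < (s.card : WithBot ℕ) := by
    rw [← degree_nodal (v := Z)]
    exact degree_sub_lt_left (by rw [degree_nodal, degree_nodal]) nodal_ne_zero
      (by rw [nodal_monic.leadingCoeff, nodal_monic.leadingCoeff])
  calc ∑ i ∈ s, (∏ j ∈ s, (Y i - Z j)) / ∏ j ∈ s.erase i, (Y i - Y j)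
      = (nodal s Z - nodal s Y).coeff (s.card - 1) := by
        rw [coeff_eq_sum hY hdegree]
        refine sum_congr rfl fun i hi => ?_
        rw [eval_sub, eval_nodal_at_node hi, sub_zero, eval_nodal]
    _ = _ := by
        rw [coeff_sub, nodal_eq, nodal_eq, prod_X_sub_C_coeff_card_pred _ _ hs.card_pos,
          prod_X_sub_C_coeff_card_pred _ _ hs.card_pos]
        ring

-- Subtracting a multiple of `nodal s Y` reduces the degree without changing values at the nodes.
lemma two_mul_sum_add_mul_prod_div_prod_erase (hY : Set.InjOn Y s) (β : K) :
    2 * ∑ i ∈ s, (Y i + β) * (∏ j ∈ s, (Y i - Z j)) / ∏ j ∈ s.erase i, (Y i - Y j) =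
      (∑ j ∈ s, Z j) ^ 2 - ∑ j ∈ s, Z j ^ 2 + (∑ j ∈ s, Y j) ^ 2 + ∑ j ∈ s, Y j ^ 2 -
        2 * (∑ j ∈ s, Z j) * ∑ j ∈ s, Y j + 2 * β * (∑ j ∈ s, Y j - ∑ j ∈ s, Z j) := by
  rcases s.eq_empty_or_nonempty with rfl | hs
  · simp
  have hcard : s.card - 1 + 2 = s.card + 1 := by have := hs.card_pos; omega
  set α := β - ∑ j ∈ s, Z j + ∑ j ∈ s, Y j with hα
  calc 2 * ∑ i ∈ s, (Y i + β) * (∏ j ∈ s, (Y i - Z j)) / ∏ j ∈ s.erase i, (Y i - Y j)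
      = 2 * ((X + C β) * nodal s Z - (X + C α) * nodal s Y).coeff (s.card - 1) := by
        rw [coeff_eq_sum hY (degree_add_C_mul_nodal_sub_lt s Y Z β)]
        refine congrArg _ (sum_congr rfl fun i hi => ?_)
        rw [eval_sub, eval_mul, eval_mul, eval_nodal_at_node hi, mul_zero, sub_zero, eval_nodal,
          eval_add, eval_X, eval_C]
    _ = _ := by
        obtain ⟨-, -, p₂, p₃⟩ := coeff_X_sq_mul_nodal s Z
        obtain ⟨-, -, q₂, q₃⟩ := coeff_X_sq_mul_nodal s Y
        rw [coeff_sub, coeff_add_C_mul_nodal, coeff_add_C_mul_nodal, hcard,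
          Nat.sub_add_cancel hs.card_pos, p₂, q₂, hα]
        linear_combination p₃ - q₃

end Interpolation

/-- The product over `y ≠ x` of the ratios of `(x - d - y) / (x - d + y)` to `(x - y) / (x + y)`:
up to sign and factorials, the factor by which Thrall's formula changes when the row length `x` is
lowered by `d`. -/
def shiftRatio (d : ℚ) (S : Finset ℕ) (x : ℕ) : ℚ :=
  ∏ y ∈ S.erase x, ((x : ℚ) - d - y) * (x + y) / ((x - d + y) * (x - y))

lemma prod_sub_div_prod_erase_sub (d : ℚ) {S : Finset ℕ} {x : ℕ} (hx : x ∈ S) :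
    (∏ y ∈ S, ((x : ℚ) * (x - d) - y * (y + d))) /
      ∏ y ∈ S.erase x, ((x : ℚ) * (x - d) - y * (y - d)) = -2 * d * (x * shiftRatio d S x) := by
  rw [← mul_prod_erase _ _ hx, mul_div_assoc, ← prod_div_distrib, shiftRatio, ← mul_assoc]
  congr 1
  · ring
  · refine prod_congr rfl fun y _ => ?_
    congr 1 <;> ring

lemma injOn_mul_sub {d : ℕ} {S : Finset ℕ} (hS : ∀ x ∈ S, ∀ y ∈ S, x + y = d → x = y) :
    Set.InjOn (fun x : ℕ => (x : ℚ) * (x - d)) S := by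
  intro x hx y hy hxy
  have hfactor : ((x : ℚ) - y) * (x + y - d) = 0 := by linear_combination hxy
  rcases mul_eq_zero.1 hfactor with h | h
  · exact_mod_cast sub_eq_zero.1 h
  · exact hS x hx y hy (by exact_mod_cast sub_eq_zero.1 h)

lemma sum_mul_shiftRatio_one {S : Finset ℕ} (hS : ∀ x ∈ S, 0 < x) :
    ∑ x ∈ S, (x : ℚ) * shiftRatio 1 S x = ∑ x ∈ S, (x : ℚ) := by
  have h := sum_prod_div_prod_erase S (fun x : ℕ => (x : ℚ) * (x + 1))
    (injOn_mul_sub (d := 1) fun x hx y hy hxy => by have := hS x hx; have := hS y hy; omega)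
  push_cast at h
  rw [sum_congr rfl fun x hx => prod_sub_div_prod_erase_sub 1 hx, ← mul_sum] at h
  simp only [mul_add, mul_sub, mul_one, sum_add_distrib, sum_sub_distrib] at h
  linarith

lemma sum_mul_shiftRatio_three {S : Finset ℕ} (hS : ∀ x ∈ S, x % 2 = 1) :
    ∑ x ∈ S, ((x : ℚ) - 1) * (x - 2) * (x * shiftRatio 3 S x) =
      ∑ x ∈ S, (x : ℚ) ^ 3 + 2 * ∑ x ∈ S, (x : ℚ) - 3 * (∑ x ∈ S, (x : ℚ)) ^ 2 := by
  have h := two_mul_sum_add_mul_prod_div_prod_erase S (fun x : ℕ => (x : ℚ) * (x + 3))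
    (injOn_mul_sub (d := 3) fun x hx y hy hxy => by
      have := hS x hx; have := hS y hy; omega) 2
  have hterm : ∀ x ∈ S, ((x : ℚ) * (x - 3) + 2) * (∏ y ∈ S, ((x : ℚ) * (x - 3) - y * (y + 3))) /
      ∏ y ∈ S.erase x, ((x : ℚ) * (x - 3) - y * (y - 3)) =
      -6 * (((x : ℚ) - 1) * (x - 2) * (x * shiftRatio 3 S x)) := by
    intro x hx
    rw [mul_div_assoc, prod_sub_div_prod_erase_sub 3 hx]
    ring
  have hcube : ∑ x ∈ S, ((x : ℚ) * (x + 3)) ^ 2 =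
      ∑ x ∈ S, ((x : ℚ) * (x - 3)) ^ 2 + 12 * ∑ x ∈ S, (x : ℚ) ^ 3 := by
    rw [mul_sum, ← sum_add_distrib]
    exact sum_congr rfl fun x _ => by ring
  push_cast at h
  rw [sum_congr rfl hterm, ← mul_sum, hcube] at h
  have hminus : ∑ x ∈ S, (x : ℚ) * (x - 3) = ∑ x ∈ S, (x : ℚ) ^ 2 - 3 * ∑ x ∈ S, (x : ℚ) := by
    rw [mul_sum, ← sum_sub_distrib]
    exact sum_congr rfl fun x _ => by ring
  have hplus : ∑ x ∈ S, (x : ℚ) * (x + 3) = ∑ x ∈ S, (x : ℚ) ^ 2 + 3 * ∑ x ∈ S, (x : ℚ) := by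
    rw [mul_sum, ← sum_add_distrib]
    exact sum_congr rfl fun x _ => by ring
  rw [hminus, hplus] at h
  linear_combination (-1 / 12) * h

/-- Thrall's product formula for the number of standard shifted tableaux whose shape has the set of
row lengths `S`, divided by `(∑ x ∈ S, x)!`. -/
def shiftedCount (S : Finset ℕ) : ℚ :=
  (∏ x ∈ S, (x.factorial : ℚ)⁻¹) * ∏ x ∈ S, ∏ y ∈ S with y < x, ((x : ℚ) - y) / (x + y)

lemma shiftedCount_insert {a : ℕ} {T : Finset ℕ} (ha : a ∉ T) :
    shiftedCount (insert a T) =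
      (a.factorial : ℚ)⁻¹ * (∏ y ∈ T, |(a : ℚ) - y| / (a + y)) * shiftedCount T := by
  have hsplit : ∏ y ∈ T, |(a : ℚ) - y| / (a + y) =
      (∏ y ∈ T, if y < a then ((a : ℚ) - y) / (a + y) else 1) *
        ∏ y ∈ T, if a < y then ((y : ℚ) - a) / (y + a) else 1 := by
    rw [← prod_mul_distrib]
    refine prod_congr rfl fun y hy => ?_
    rcases lt_or_gt_of_ne (ne_of_mem_of_not_mem hy ha) with h | h
    · rw [if_pos h, if_neg h.not_gt, mul_one, abs_of_pos (sub_pos.2 (Nat.cast_lt.2 h))]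
    · rw [if_neg h.not_gt, if_pos h, one_mul, abs_sub_comm, add_comm,
        abs_of_pos (sub_pos.2 (Nat.cast_lt.2 h))]
  simp only [shiftedCount, prod_filter, prod_insert ha, lt_irrefl, if_false, one_mul,
    prod_mul_distrib, hsplit]
  ring

lemma shiftedCount_erase_zero (S : Finset ℕ) : shiftedCount (S.erase 0) = shiftedCount S := by
  by_cases h : 0 ∈ S
  · have hprod : ∏ y ∈ S.erase 0, |((0 : ℕ) : ℚ) - y| / ((0 : ℕ) + y) = 1 := by
      refine prod_eq_one fun y hy => ?_
      have hy₀ : (y : ℚ) ≠ 0 := Nat.cast_ne_zero.2 (ne_of_mem_erase hy)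
      rw [Nat.cast_zero, zero_sub, abs_neg, Nat.abs_cast, zero_add, div_self hy₀]
    conv_rhs => rw [← insert_erase h, shiftedCount_insert (notMem_erase 0 S), hprod]
    simp
  · rw [erase_eq_of_notMem h]

lemma abs_sub_div_add_eq {u d y : ℕ} (hy : y ≠ u + d) :
    |(u : ℚ) - y| / (u + y) = (if u < y ∧ y < u + d then -1 else 1) *
      (((u + d : ℕ) - d - y) * ((u + d : ℕ) + y) / (((u + d : ℕ) - d + y) * ((u + d : ℕ) - y))) *
      (|((u + d : ℕ) : ℚ) - y| / ((u + d : ℕ) + y)) := by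
  have hsub : ((u + d : ℕ) : ℚ) - y ≠ 0 := sub_ne_zero.2 (Nat.cast_injective.ne hy.symm)
  have hadd : ((u + d : ℕ) : ℚ) + y ≠ 0 := by
    rw [← Nat.cast_add, Nat.cast_ne_zero]; omega
  have hu : ((u + d : ℕ) : ℚ) - d = u := by rw [Nat.cast_add, add_sub_cancel_right]
  have hsign : |(u : ℚ) - y| * ((u + d : ℕ) - y) =
      (if u < y ∧ y < u + d then -1 else 1) * (u - y) * |((u + d : ℕ) : ℚ) - y| := by
    rcases le_or_gt y u with h₁ | h₁
    · have h₂ : y ≤ u + d := by omega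
      rw [if_neg (by omega), abs_of_nonneg (sub_nonneg.2 (Nat.cast_le.2 h₁)),
        abs_of_nonneg (sub_nonneg.2 (Nat.cast_le.2 h₂)), one_mul]
    rw [abs_of_neg (sub_neg.2 (Nat.cast_lt.2 h₁))]
    rcases lt_or_gt_of_ne hy with h₂ | h₂
    · rw [if_pos ⟨h₁, h₂⟩, abs_of_pos (sub_pos.2 (Nat.cast_lt.2 h₂))]
      ring
    · rw [if_neg (by omega), abs_of_neg (sub_neg.2 (Nat.cast_lt.2 h₂))]
      ring
  rw [hu]
  rcases eq_or_ne ((u : ℚ) + y) 0 with h₀ | h₀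
  · rw [h₀, div_zero, zero_mul, div_zero, mul_zero, zero_mul]
  · field_simp
    linear_combination hsign

lemma shiftedCount_insert_erase {S : Finset ℕ} {u d : ℕ} (hx : u + d ∈ S) (hu : u ∉ S) :
    shiftedCount (insert u (S.erase (u + d))) =
      (-1) ^ #{y ∈ S | u < y ∧ y < u + d} * (u + 1).ascFactorial d *
        shiftRatio d S (u + d) * shiftedCount S := by
  have hfilter : ({y ∈ S | u < y ∧ y < u + d} : Finset ℕ) =
      {y ∈ S.erase (u + d) | u < y ∧ y < u + d} := by
    ext y
    simp only [mem_filter, mem_erase]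
    have : y < u + d → y ≠ u + d := fun h => h.ne
    tauto
  have hfactorial : ((u + d).factorial : ℚ) = u.factorial * (u + 1).ascFactorial d := by
    rw [← Nat.factorial_mul_ascFactorial, Nat.cast_mul]
  conv_rhs => rw [← insert_erase hx, shiftedCount_insert (notMem_erase _ S), insert_erase hx]
  rw [shiftedCount_insert fun h => hu (mem_of_mem_erase h),
    prod_congr rfl fun y hy => abs_sub_div_add_eq (d := d) (ne_of_mem_erase hy), prod_mul_distrib,
    prod_mul_distrib, ← prod_filter, prod_const, ← hfilter, hfactorial, shiftRatio]
  have : ((u + 1).ascFactorial d : ℚ) ≠ 0 := Nat.cast_ne_zero.2 (Nat.ascFactorial_pos _ _).ne'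
  field_simp

lemma shiftRatio_one_eq_zero {S : Finset ℕ} {k : ℕ} (hk : k ∈ S) : shiftRatio 1 S (k + 1) = 0 :=
  prod_eq_zero (mem_erase.2 ⟨k.lt_succ_self.ne, hk⟩) (by simp)

lemma shiftedCount_insert_erase_succ {S : Finset ℕ} {k : ℕ} (hk₁ : k + 1 ∈ S) (hk : k ∉ S) :
    shiftedCount (insert k (S.erase (k + 1))) =
      (k + 1 : ℕ) * shiftRatio 1 S (k + 1) * shiftedCount S := by
  have hempty : ({y ∈ S | k < y ∧ y < k + 1} : Finset ℕ) = ∅ :=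
    filter_false_of_mem fun y _ h => by omega
  rw [shiftedCount_insert_erase hk₁ hk, hempty]
  simp [Nat.ascFactorial_succ]

/-- `w ∈ B_N` is increasing on the positive integers, and the negative values it takes there are
the negatives of the elements of `S`. -/
structure IsGrassmannian (N : ℕ) (w : Equiv.Perm ℤ) (S : Finset ℕ) : Prop where
  isSignedPerm : IsSignedPerm N w
  map_lt_map : ∀ i j : ℤ, 0 < i → i < j → w i < w j
  mem_iff : ∀ x : ℕ, x ∈ S ↔ w⁻¹ x < 0

lemma IsNegSegment.map_lt_map {w : Equiv.Perm ℤ} {b : List ℕ} {s : ℤ} (h : IsNegSegment w s b)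
    (hb : b.Pairwise (· > ·)) {i j : ℤ} (hi : s ≤ i) (hij : i < j) (hj : j < s + b.length) :
    w i < w j := by
  induction b generalizing s with
  | nil => simp at hj; omega
  | cons a b ih =>
    rw [List.length_cons] at hj
    rw [List.pairwise_cons] at hb
    rcases hi.eq_or_lt with rfl | hi
    · obtain ⟨x, hx, hwj⟩ := h.2.exists_mem (i := j) (by omega) (by omega)
      rw [h.1, hwj, neg_lt_neg_iff, Nat.cast_lt]
      exact hb.1 x hx
    · exact ih h.2 hb.2 (by omega) (by omega)

lemma HasNegPrefix.isGrassmannian {M : ℕ} {w : Equiv.Perm ℤ} {b : List ℕ}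
    (h : HasNegPrefix M w b) (hb : b.Pairwise (· > ·)) : IsGrassmannian M w b.toFinset where
  isSignedPerm := h.isSignedPerm
  map_lt_map i j hi hij := by
    rcases le_or_gt j b.length with hj | hj
    · exact h.isNegSegment.map_lt_map hb hi hij (by omega)
    rcases le_or_gt i b.length with hi' | hi'
    · exact (h.map_neg hi hi').trans (h.map_pos j hj)
    · exact h.map_lt_map i j hi' hij
  mem_iff x := by
    rw [List.mem_toFinset]
    constructor
    · intro hx
      obtain ⟨i, hi, -, hwi⟩ := h.isNegSegment.exists_map_eq hx
      have hix : w⁻¹ x = -i := by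
        rw [Equiv.Perm.inv_eq_iff_eq, h.isSignedPerm.map_neg, hwi, neg_neg]
      omega
    · intro hx
      obtain ⟨i, hi⟩ : ∃ i, w⁻¹ x = -i := ⟨_, (neg_neg _).symm⟩
      have hwi : w i = -x := by
        rw [Equiv.Perm.inv_eq_iff_eq, h.isSignedPerm.map_neg] at hi
        omega
      have hib : i ≤ b.length := by
        by_contra! hib
        have := h.map_pos i hib
        omega
      obtain ⟨y, hy, hwy⟩ := h.isNegSegment.exists_mem (i := i) (by omega) (by omega)
      rwa [show x = y by omega]

namespace IsGrassmannian

variable {N : ℕ} {w : Equiv.Perm ℤ} {S : Finset ℕ} (h : IsGrassmannian N w S)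

include h

lemma pos_of_mem {x : ℕ} (hx : x ∈ S) : 0 < x := by
  rw [h.mem_iff] at hx
  rcases Nat.eq_zero_or_pos x with rfl | hx₀
  · rw [Nat.cast_zero, h.isSignedPerm.inv.map_zero] at hx
    omega
  · exact hx₀

lemma lt_of_add_one_mem {k : ℕ} (hk : k + 1 ∈ S) : k < N := by
  by_contra! hN
  rw [h.mem_iff, h.isSignedPerm.inv.map_of_lt _ (by omega)] at hk
  omega

lemma inv_sBLow_pos {k : ℕ} (hk₁ : k + 1 ∈ S) (hk : k ∉ S) : 0 < w⁻¹ (sBLow k) := by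
  rw [h.mem_iff] at hk₁ hk
  rcases sBLow_cases k with ⟨rfl, hlow⟩ | ⟨hk₀, hlow⟩
  · rw [hlow, h.isSignedPerm.inv.map_neg]
    simpa using hk₁
  · have := h.isSignedPerm.inv.map_ne_zero (x := k) (by omega)
    rw [hlow]
    omega

lemma inv_add_one_lt_inv_sBLow_iff {k : ℕ} :
    w⁻¹ (k + 1) < w⁻¹ (sBLow k) ↔ k + 1 ∈ S ∧ k ∉ S := by
  constructor
  · intro hlt
    have hcases := sBLow_cases k
    have hneg : w⁻¹ (k + 1) < 0 := by
      by_contra! hi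
      have hne := h.isSignedPerm.inv.map_ne_zero (x := k + 1) (by omega)
      have := h.map_lt_map _ _ (hi.lt_of_ne hne.symm) hlt
      simp only [Equiv.Perm.coe_inv, Equiv.apply_symm_apply] at this
      omega
    have hpos : 0 < w⁻¹ (sBLow k) := by
      by_contra! hj
      have hne := h.isSignedPerm.inv.map_ne_zero (x := sBLow k) (by omega)
      have := h.map_lt_map _ _ (neg_pos.2 (hj.lt_of_ne hne)) (neg_lt_neg hlt)
      simp only [h.isSignedPerm.map_neg, Equiv.Perm.coe_inv, Equiv.apply_symm_apply] at this
      omega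
    rw [h.mem_iff, h.mem_iff]
    refine ⟨by exact_mod_cast hneg, ?_⟩
    rcases hcases with ⟨rfl, -⟩ | ⟨-, hlow⟩
    · simp [h.isSignedPerm.inv.map_zero]
    · rw [← hlow]
      exact hpos.le.not_gt
  · rintro ⟨hk₁, hk⟩
    have hneg := (h.mem_iff _).1 hk₁
    push_cast at hneg
    exact hneg.trans (h.inv_sBLow_pos hk₁ hk)

lemma sB_map_lt_sB_map {k : ℕ} (hk₁ : k + 1 ∈ S) (hk : k ∉ S) {p q : ℤ} (hp : 0 < p)
    (hpq : p < q) : sB k (w p) < sB k (w q) := by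
  have hlt := h.map_lt_map p q hp hpq
  have hw := h.isSignedPerm
  rw [sB_lt_sB_iff k (hw.map_ne_zero (by omega)) (hw.map_ne_zero (by omega))]
  · exact hlt
  intro hswap
  have hneg := (h.mem_iff _).1 hk₁
  have hpos := h.inv_sBLow_pos hk₁ hk
  have hcases := sBLow_cases k
  have hq : w q = k + 1 ∨ w q = -sBLow k := by
    rw [sB_apply] at hswap
    split_ifs at hswap <;> omega
  push_cast at hneg
  rw [← Equiv.Perm.eq_inv_iff_eq, ← Equiv.Perm.eq_inv_iff_eq, hw.inv.map_neg] at hq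
  omega

lemma sB_mul {k : ℕ} (hk₁ : k + 1 ∈ S) (hk : k ∉ S) :
    IsGrassmannian N (sB k * w) ((insert k (S.erase (k + 1))).erase 0) where
  isSignedPerm := (isSignedPerm_sB (h.lt_of_add_one_mem hk₁)).mul h.isSignedPerm
  map_lt_map p q hp hpq := h.sB_map_lt_sB_map hk₁ hk hp hpq
  mem_iff x := by
    have hneg := (h.mem_iff _).1 hk₁
    have hpos := h.inv_sBLow_pos hk₁ hk
    have hcases := sBLow_cases k
    have hzero := h.isSignedPerm.inv.map_zero
    rw [mul_inv_rev, sB_inv, Equiv.Perm.mul_apply, mem_erase, mem_insert, mem_erase]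
    push_cast at hneg
    obtain hx | rfl | rfl | hx : x = 0 ∨ x = k + 1 ∨ x = k ∨ (x ≠ 0 ∧ x ≠ k ∧ x ≠ k + 1) := by omega
    · have hx₀ : sB k x = 0 := by rw [sB_apply]; split_ifs <;> omega
      rw [hx₀]
      omega
    · have hx₁ : sB k (k + 1 : ℕ) = sBLow k := by rw [sB_apply]; split_ifs <;> omega
      rw [hx₁]
      omega
    · rcases Nat.eq_zero_or_pos x with rfl | hx₀
      · have hx₀ : sB 0 (0 : ℕ) = 0 := by rw [sB_apply]; split_ifs <;> omega
        rw [hx₀]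
        omega
      · have hx₁ : sB x x = x + 1 := by rw [sB_apply]; split_ifs <;> omega
        rw [hx₁]
        omega
    · have hxx : sB k x = x := by rw [sB_apply]; split_ifs <;> omega
      rw [hxx, ← h.mem_iff]
      tauto

lemma sum_eq_invCount : ∑ x ∈ S, x = invCount N w := by
  induction hL : invCount N w generalizing w S with
  | zero =>
    have hw := h.isSignedPerm.eq_one_of_invCount_eq_zero hL
    refine sum_eq_zero fun x hx => ?_
    have := (h.mem_iff x).1 hx
    simp [hw] at this
    omega
  | succ L ih =>
    have hw : w ≠ 1 := by
      rintro rfl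
      simp [invCount_one] at hL
    obtain ⟨k, hkN, hdesc⟩ := h.isSignedPerm.exists_desc_of_ne_one hw
    obtain ⟨hk₁, hk⟩ := h.inv_add_one_lt_inv_sBLow_iff.1 hdesc
    have hlen := h.isSignedPerm.invCount_sB_mul_of_desc hkN hdesc
    have hsum := ih (h.sB_mul hk₁ hk) (by omega)
    rw [sum_erase (a := 0) _ rfl, sum_insert fun hmem => hk (mem_of_mem_erase hmem)] at hsum
    have := add_sum_erase S (fun x => x) hk₁
    omega

lemma words_sB_mul_eq_empty {k : ℕ} (hkN : k < N) (hk : ¬(k + 1 ∈ S ∧ k ∉ S)) {L : ℕ}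
    (hL : L ≤ invCount N w) : words N L (sB k * w) = ∅ := by
  refine ((isSignedPerm_sB hkN).mul h.isSignedPerm).words_eq_empty ?_
  rcases h.isSignedPerm.invCount_sB_mul hkN with ⟨hdesc, -⟩ | ⟨-, hlen⟩
  · exact absurd (h.inv_add_one_lt_inv_sBLow_iff.1 hdesc) hk
  · omega

lemma sum_range_eq_sum {f : ℕ → ℚ} (g : ℕ → ℚ) (hg : ∀ k, k + 1 ∈ S → f k = g (k + 1))
    (hf : ∀ k < N, k + 1 ∉ S → f k = 0) : ∑ k ∈ range N, f k = ∑ x ∈ S, g x := by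
  rw [← sum_filter_of_ne (p := fun k => k + 1 ∈ S)
    fun k hk hne => by_contra fun hkS => hne (hf k (mem_range.1 hk) hkS)]
  refine sum_nbij' (· + 1) (· - 1) (fun k hk => (mem_filter.1 hk).2) (fun x hx => ?_)
    (fun k _ => k.add_sub_cancel_right 1) (fun x hx => Nat.sub_add_cancel (h.pos_of_mem hx))
    (fun k hk => hg k (mem_filter.1 hk).2)
  rw [← Nat.sub_add_cancel (h.pos_of_mem hx)] at hx
  exact mem_filter.2 ⟨mem_range.2 (h.lt_of_add_one_mem hx), hx⟩

/-- Peeling off the first letter gives the recursion of the product formula: by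
`sum_mul_shiftRatio_one` the terms add up with total weight `∑ x ∈ S, x`, the length of `w`. -/
lemma card_words_eq {L : ℕ} (hL : invCount N w = L) :
    (#(words N L w) : ℚ) = L.factorial * shiftedCount S := by
  induction L generalizing w S with
  | zero =>
    have hw := h.isSignedPerm.eq_one_of_invCount_eq_zero hL
    have hS : S = ∅ := eq_empty_of_forall_notMem fun x => by simp [h.mem_iff, hw]
    simp [hw, hS, words, shiftedCount]
  | succ L ih =>
    have hterm : ∀ k, k + 1 ∈ S → (#(words N L (sB k * w)) : ℚ) =
        L.factorial * shiftedCount S * ((k + 1 : ℕ) * shiftRatio 1 S (k + 1)) := by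
      intro k hk₁
      have hkN := h.lt_of_add_one_mem hk₁
      by_cases hk : k ∈ S
      · rw [h.words_sB_mul_eq_empty hkN (by tauto) (by omega), shiftRatio_one_eq_zero hk]
        simp
      · have hlen := h.isSignedPerm.invCount_sB_mul_of_desc hkN
          (h.inv_add_one_lt_inv_sBLow_iff.2 ⟨hk₁, hk⟩)
        rw [ih (h.sB_mul hk₁ hk) (by omega), shiftedCount_erase_zero,
          shiftedCount_insert_erase_succ hk₁ hk]
        ring
    have hzero : ∀ k < N, k + 1 ∉ S → (#(words N L (sB k * w)) : ℚ) = 0 := fun k hkN hk₁ => by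
      rw [h.words_sB_mul_eq_empty hkN (by tauto) (by omega), card_empty, Nat.cast_zero]
    calc (#(words N (L + 1) w) : ℚ)
        = ∑ k ∈ range N, (#(words N L (sB k * w)) : ℚ) := by
          rw [card_words_succ, Nat.cast_sum]
      _ = ∑ x ∈ S, L.factorial * shiftedCount S * ((x : ℚ) * shiftRatio 1 S x) :=
          h.sum_range_eq_sum _ hterm hzero
      _ = L.factorial * shiftedCount S * ∑ x ∈ S, (x : ℚ) := by
          rw [← mul_sum, sum_mul_shiftRatio_one fun x => h.pos_of_mem]
      _ = (L + 1).factorial * shiftedCount S := by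
          rw [← Nat.cast_sum, h.sum_eq_invCount, hL, Nat.factorial_succ]
          push_cast
          ring

lemma card_RSet_eq : (Nat.card (RSet N w) : ℚ) = (∑ x ∈ S, x).factorial * shiftedCount S := by
  rw [h.isSignedPerm.card_RSet, h.sum_eq_invCount, h.card_words_eq rfl]

end IsGrassmannian

/-- The set `{1, 3, …, 2n - 1}`. -/
def odds (n : ℕ) : Finset ℕ := (oddsDesc n).toFinset

lemma mem_odds {n a : ℕ} : a ∈ odds n ↔ a < 2 * n ∧ a % 2 = 1 := by
  rw [odds, List.mem_toFinset, mem_oddsDesc]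

lemma notMem_odds (n : ℕ) : 2 * n + 1 ∉ odds n := by
  rw [mem_odds]
  omega

lemma odds_succ (n : ℕ) : odds (n + 1) = insert (2 * n + 1) (odds n) :=
  List.toFinset_cons

lemma sum_odds {M : Type*} [AddCommMonoid M] (f : ℕ → M) (n : ℕ) :
    ∑ x ∈ odds n, f x = ∑ j ∈ range n, f (2 * j + 1) := by
  induction n with
  | zero => rfl
  | succ n ih => rw [odds_succ, sum_insert (notMem_odds n), ih, sum_range_succ, add_comm]

lemma sum_odds_id (n : ℕ) : ∑ x ∈ odds n, x = n ^ 2 := by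
  induction n with
  | zero => rfl
  | succ n ih => rw [odds_succ, sum_insert (notMem_odds n), ih]; ring

lemma sum_odds_cube (n : ℕ) : ∑ x ∈ odds n, (x : ℚ) ^ 3 = (n : ℚ) ^ 2 * (2 * n ^ 2 - 1) := by
  induction n with
  | zero => simp [odds, oddsDesc]
  | succ n ih => rw [odds_succ, sum_insert (notMem_odds n), ih]; push_cast; ring

lemma shiftRatio_three_odds_three {n : ℕ} (hn : 2 ≤ n) :
    shiftRatio 3 (odds n) 3 = -(n : ℚ) * (n ^ 2 - 1) / 3 := by
  induction n, hn using Nat.le_induction with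
  | base =>
    have hodds : (odds 2).erase 3 = {1} := by decide
    rw [shiftRatio, hodds, prod_singleton]
    norm_num
  | succ n hn ih =>
    have hcast : (2 : ℚ) ≤ n := by exact_mod_cast hn
    have hne : (n : ℚ) - 1 ≠ 0 := by linarith
    have hne' : 2 * (n : ℚ) + 1 ≠ 0 := by linarith
    have hden : ((3 : ℚ) - 3 + (2 * n + 1)) * (3 - (2 * n + 1)) = -2 * (2 * n + 1) * (n - 1) := by
      ring
    rw [shiftRatio, odds_succ, erase_insert_of_ne (by omega),
      prod_insert fun h => notMem_odds n (mem_of_mem_erase h), ← shiftRatio, ih]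
    push_cast
    rw [hden]
    field_simp
    ring

/-- The value at the node `x` of the Lagrange identity `sum_mul_shiftRatio_three` for the set
`{1, 3, …, 2n - 1}`; at `x = 2k + 3` this is `-n²(n² - 1)(n² - 2) |R(w_k)| / |R(w_0)|`. -/
def wkWeight (n x : ℕ) : ℚ := ((x : ℚ) - 1) * (x - 2) * (x * shiftRatio 3 (odds n) x)

lemma sum_odds_wkWeight (n : ℕ) : ∑ x ∈ odds n, wkWeight n x = (n : ℚ) ^ 2 - n ^ 4 := by
  simp only [wkWeight]
  rw [sum_mul_shiftRatio_three fun x hx => (mem_odds.1 hx).2, sum_odds_cube, ← Nat.cast_sum,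
    sum_odds_id]
  push_cast
  ring

lemma sum_Icc_wkWeight {n : ℕ} (hn : 2 ≤ n) :
    ∑ k ∈ Icc 1 (n - 2), wkWeight n (2 * k + 3) = -(n : ℚ) * (n ^ 2 - 1) * (n - 2) := by
  obtain ⟨m, rfl⟩ := Nat.exists_eq_add_of_le' hn
  have hone : wkWeight (m + 2) 1 = 0 := by simp [wkWeight]
  have hthree := shiftRatio_three_odds_three hn
  have hsum := sum_odds_wkWeight (m + 2)
  rw [sum_odds, sum_range_succ', sum_range_succ'] at hsum
  have hIcc : ∑ k ∈ Icc 1 (m + 2 - 2), wkWeight (m + 2) (2 * k + 3) =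
      ∑ i ∈ range m, wkWeight (m + 2) (2 * (i + 1 + 1) + 1) := by
    rw [Nat.add_sub_cancel, ← Ico_add_one_right_eq_Icc, sum_Ico_eq_sum_range, Nat.add_sub_cancel]
    exact sum_congr rfl fun i _ => congrArg _ (by ring)
  rw [hIcc]
  simp only [mul_zero, zero_add, mul_one, Nat.reduceAdd, hone, add_zero] at hsum
  rw [wkWeight, hthree] at hsum
  push_cast at hsum ⊢
  linear_combination hsum

lemma card_RSet_w0B (n : ℕ) :
    (Nat.card (RSet n (w0B n)) : ℚ) = (n ^ 2).factorial * shiftedCount (odds n) := by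
  obtain ⟨M, w, hw, hcard⟩ := Transfers.range'_one n n _ (hasNegPrefix_w0B n)
  rw [← hcard, (hw.isGrassmannian (pairwise_oddsDesc n)).card_RSet_eq, ← odds, sum_odds_id]

lemma pairwise_oddsDesc_append (i t : ℕ) :
    ((oddsDesc t).map (· + (2 * i + 6)) ++
      ([2 * i + 3, 2 * i + 2, 2 * i + 1] ++ oddsDesc i)).Pairwise (· > ·) := by
  rw [List.pairwise_append, List.pairwise_append]
  refine ⟨pairwise_map_add (pairwise_oddsDesc t) _,
    ⟨by simp, pairwise_oddsDesc i, fun a ha b hb => ?_⟩, fun a ha b hb => ?_⟩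
  · rw [mem_oddsDesc] at hb
    simp only [List.mem_cons, List.not_mem_nil, or_false] at ha
    omega
  · obtain ⟨c, -, rfl⟩ := List.mem_map.1 ha
    simp only [List.mem_append, List.mem_cons, List.not_mem_nil, or_false, mem_oddsDesc] at hb
    omega

lemma toFinset_oddsDesc_append (i t : ℕ) :
    ((oddsDesc t).map (· + (2 * i + 6)) ++
      ([2 * i + 3, 2 * i + 2, 2 * i + 1] ++ oddsDesc i)).toFinset =
      insert (2 * (i + 1)) ((odds (i + 3 + t)).erase (2 * (i + 1) + 3)) := by
  ext a
  have hmap : a ∈ (oddsDesc t).map (· + (2 * i + 6)) ↔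
      2 * i + 6 ≤ a ∧ a < 2 * (i + 3 + t) ∧ a % 2 = 1 := by
    rw [List.mem_map]
    constructor
    · rintro ⟨b, hb, rfl⟩
      rw [mem_oddsDesc] at hb
      omega
    · intro h
      exact ⟨a - (2 * i + 6), mem_oddsDesc.2 (by omega), by omega⟩
  simp only [List.mem_toFinset, List.mem_append, hmap, List.mem_cons, List.not_mem_nil, or_false,
    mem_oddsDesc, mem_insert, mem_erase, mem_odds]
  omega

lemma card_RSet_of_eq_wkFun {n k : ℕ} (hk : 1 ≤ k) (hkn : k + 2 ≤ n) {w : Equiv.Perm ℤ}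
    (h : ∀ x, w x = wkFun n k x) :
    (Nat.card (RSet n w) : ℚ) =
      (∑ x ∈ insert (2 * k) ((odds n).erase (2 * k + 3)), x).factorial *
        shiftedCount (insert (2 * k) ((odds n).erase (2 * k + 3))) := by
  obtain ⟨i, rfl⟩ := Nat.exists_eq_add_of_le' hk
  obtain ⟨t, rfl⟩ := Nat.exists_eq_add_of_le hkn
  obtain ⟨M, w', hw', hcard⟩ :=
    Transfers.range'_append_three i t _ _ (hasNegPrefix_of_eq_wkFun (t := t) h)
  rw [← toFinset_oddsDesc_append,
    ← (hw'.isGrassmannian (pairwise_oddsDesc_append i t)).card_RSet_eq, hcard]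

lemma card_RSet_mul_eq {n k : ℕ} (hk : 1 ≤ k) (hkn : k + 2 ≤ n) {w : Equiv.Perm ℤ}
    (h : ∀ x, w x = wkFun n k x) :
    (Nat.card (RSet n w) : ℚ) * (n ^ 2 * (n ^ 2 - 1) * (n ^ 2 - 2)) =
      -Nat.card (RSet n (w0B n)) * wkWeight n (2 * k + 3) := by
  have hmem : 2 * k + 3 ∈ odds n := mem_odds.2 (by omega)
  have hnotMem : 2 * k ∉ odds n := fun hmem => by
    rw [mem_odds] at hmem
    omega
  have hbetween : ({y ∈ odds n | 2 * k < y ∧ y < 2 * k + 3} : Finset ℕ) = {2 * k + 1} := by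
    ext y
    rw [mem_filter, mem_odds, mem_singleton]
    omega
  obtain ⟨q, hq⟩ : ∃ q, ∑ x ∈ insert (2 * k) ((odds n).erase (2 * k + 3)), x = q := ⟨_, rfl⟩
  have hqn : n ^ 2 = q + 3 := by
    have hsum := add_sum_erase (odds n) (fun x => x) hmem
    rw [sum_odds_id] at hsum
    rw [sum_insert fun h => hnotMem (mem_of_mem_erase h)] at hq
    omega
  have hcast : (n : ℚ) ^ 2 = q + 3 := by exact_mod_cast hqn
  rw [card_RSet_of_eq_wkFun hk hkn h, card_RSet_w0B, hq, hqn, hcast,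
    shiftedCount_insert_erase hmem hnotMem, hbetween, wkWeight]
  simp only [card_singleton, Nat.ascFactorial_succ, Nat.ascFactorial_zero, Nat.factorial_succ]
  push_cast
  ring

/-- For every `n ≥ 3`, with `W k = w_k ∈ Bₙ` for `1 ≤ k ≤ n - 2`,
`n(n² - 2) · Σ_{k=1}^{n-2} |R(w_k)| = (n - 2) · |R(w₀ᴮ)|`. -/
theorem sum_Rwk_card (n : ℕ) (hn : 3 ≤ n) (W : ℕ → Equiv.Perm ℤ)
    (hW : ∀ k, 1 ≤ k → k ≤ n - 2 → ∀ i : ℤ, W k i = wkFun n k i) :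
    n * (n ^ 2 - 2) * ∑ k ∈ Finset.Icc 1 (n - 2), Nat.card ↥(RSet n (W k))
      = (n - 2) * Nat.card ↥(RSet n (w0B n)) := by
  have hcast : (3 : ℚ) ≤ n := by exact_mod_cast hn
  have hsum : (∑ k ∈ Icc 1 (n - 2), (Nat.card (RSet n (W k)) : ℚ)) *
      (n ^ 2 * (n ^ 2 - 1) * (n ^ 2 - 2)) =
        -Nat.card (RSet n (w0B n)) * (-n * (n ^ 2 - 1) * (n - 2)) := by
    rw [← sum_Icc_wkWeight (by omega), sum_mul, mul_sum]
    refine sum_congr rfl fun k hk => ?_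
    rw [mem_Icc] at hk
    exact card_RSet_mul_eq hk.1 (by omega) (hW k hk.1 hk.2)
  have hne : (n : ℚ) * (n ^ 2 - 1) ≠ 0 := by
    have : (0 : ℚ) < n ^ 2 - 1 := by nlinarith
    positivity
  have hsq : 2 ≤ n ^ 2 := by nlinarith
  rw [← Nat.cast_inj (R := ℚ)]
  push_cast [Nat.cast_sub hsq, Nat.cast_sub (show 2 ≤ n by omega)]
  refine mul_left_cancel₀ hne ?_
  linear_combination hsum
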